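/- Let d ≥ 3 and 0 < α < d/2. For every ρ with max(1/α, 1) < ρ < d/(2α), ℙ-almost surely, log P₀(A(t) ≥ t^ρ, S_t = 0) / log t → −αρ + 1 − d/2 as t → ∞; that is, P₀(A(t) ≥ t^ρ, S_t = 0) = t^{−αρ+1−d/2+o(1)} as t → ∞. -/

import Mathlib

open MeasureTheory ProbabilityTheory Filter Set

noncomputable section

/-- `n`-step transition probabilities of the discrete-time simple random walk on `ℤ^m`. -/
def srwKernel (m : ℕ) : ℕ → (Fin m → ℤ) → (Fin m → ℤ) → ℝ
  | 0, x, y => if x = y then 1 else 0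
  | n + 1, x, y =>
      (∑ i : Fin m, (srwKernel m n (Function.update x i (x i + 1)) y
        + srwKernel m n (Function.update x i (x i - 1)) y)) / (2 * m)

/-- Transition kernel of the continuous-time simple random walk on `ℤ^m` which jumps to
each of its `2m` nearest neighbours at rate `1` (total jump rate `2m`). -/
def heatKernel (m : ℕ) (t : ℝ) (x y : Fin m → ℤ) : ℝ :=
  ∑' n : ℕ, Real.exp (-(2 * m) * t) * ((2 * m) * t) ^ n / n.factorial * srwKernel m n x y

/-- `(P, S)` is (a realization of) the continuous-time simple random walk on `ℤ^m`:
under `P x` the process `S` starts at `x`, has right-continuous (piecewise constant)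
paths, and its finite-dimensional distributions are given by the heat kernel. -/
structure IsCTSRW (m : ℕ) {Ω : Type*} [MeasurableSpace Ω]
    (P : (Fin m → ℤ) → Measure Ω) (S : ℝ → Ω → (Fin m → ℤ)) : Prop where
  prob : ∀ x, IsProbabilityMeasure (P x)
  meas : Measurable fun p : ℝ × Ω => S p.1 p.2
  start : ∀ x, ∀ᵐ ω ∂ P x, S 0 ω = x
  rightCont : ∀ x, ∀ᵐ ω ∂ P x, ∀ t : ℝ, 0 ≤ t →
    ∃ ε > (0 : ℝ), ∀ u, t ≤ u → u < t + ε → S u ω = S t ω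
  fdd : ∀ x (n : ℕ) (t : Fin (n + 1) → ℝ), 0 ≤ t 0 →
    (∀ i : Fin n, t i.castSucc ≤ t i.succ) →
    ∀ y : Fin (n + 1) → (Fin m → ℤ),
      (P x {ω | ∀ i, S (t i) ω = y i}).toReal
        = heatKernel m (t 0) x (y 0)
          * ∏ i : Fin n, heatKernel m (t i.succ - t i.castSucc) (y i.castSucc) (y i.succ)

/-- `z` is an i.i.d. nonnegative random scenery on `ℤ^d` whose common upper tail decays
like `r^{-α+o(1)}`. -/
structure IsScenery (d : ℕ) (α : ℝ) {Ω : Type*} [MeasurableSpace Ω]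
    (μ : Measure Ω) (z : (Fin d → ℤ) → Ω → ℝ) : Prop where
  prob : IsProbabilityMeasure μ
  meas : ∀ x, Measurable (z x)
  nonneg : ∀ x ω, 0 ≤ z x ω
  indep : iIndepFun z μ
  ident : ∀ x, IdentDistrib (z x) (z 0) μ μ
  tail : Tendsto (fun r : ℝ => Real.log (μ {ω | r < z 0 ω}).toReal / Real.log r)
    atTop (nhds (-α))

/-- The random walk in random scenery `A(t) = ∫₀ᵗ z(S_u) du`. -/
def rwrs {Ωz Ωw : Type*} (d : ℕ) (z : (Fin d → ℤ) → Ωz → ℝ)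
    (S : ℝ → Ωw → (Fin d → ℤ)) (t : ℝ) (ζ : Ωz) (ω : Ωw) : ℝ :=
  ∫ u in Set.Ioc (0 : ℝ) t, z (S u ω) ζ

end

open MeasureTheory ProbabilityTheory Filter Set

open MeasureTheory ProbabilityTheory Filter Set
namespace RWRS
open Real in
noncomputable def nu : Measure ℝ := (ENNReal.ofReal (2*π))⁻¹ • volume.restrict (Ioc (-π) π)

open Real in
instance : IsProbabilityMeasure nu := by
  constructor
  rw [nu, Measure.smul_apply, Measure.restrict_apply_univ, Real.volume_Ioc, smul_eq_mul]
  have : π - -π = 2 * π := by ring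
  rw [this]
  apply ENNReal.inv_mul_cancel
  · simp [Real.pi_pos]
  · exact ENNReal.ofReal_ne_top

open Real in
lemma integral_nu {E : Type*} [NormedAddCommGroup E] [NormedSpace ℝ E] (f : ℝ → E) :
    ∫ x, f x ∂nu = (2*π)⁻¹ • ∫ x in (-π)..π, f x := by
  rw [nu, integral_smul_measure, intervalIntegral.integral_of_le (by linarith [pi_pos])]
  congr 1
  rw [ENNReal.toReal_inv, ENNReal.toReal_ofReal (by positivity)]

noncomputable def ch (k : ℤ) (θ : ℝ) : ℂ := Complex.exp (k * θ * Complex.I)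

lemma ch_add (k l : ℤ) (θ : ℝ) : ch (k + l) θ = ch k θ * ch l θ := by
  rw [ch, ch, ch, ← Complex.exp_add]; congr 1; push_cast; ring

lemma ch_norm (k : ℤ) (θ : ℝ) : ‖ch k θ‖ = 1 := by
  have : (k * θ * Complex.I : ℂ) = ((k * θ : ℝ) : ℂ) * Complex.I := by push_cast; ring
  rw [ch, this, Complex.norm_exp_ofReal_mul_I]

lemma ch_cont (k : ℤ) : Continuous (ch k) := by
  unfold ch; fun_prop

lemma ch_one_add (θ : ℝ) : ch 1 θ + ch (-1) θ = ((2 * Real.cos θ : ℝ) : ℂ) := by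
  rw [ch, ch]; push_cast; rw [Complex.cos]; ring_nf

open Real in
lemma ch_int (k : ℤ) : ∫ θ, ch k θ ∂nu = if k = 0 then 1 else 0 := by
  rw [integral_nu]
  split_ifs with h
  · subst h
    have h1 : ∀ θ : ℝ, ch 0 θ = 1 := fun θ => by simp [ch]
    simp_rw [h1]
    rw [intervalIntegral.integral_const, smul_smul]
    have : (2 * π)⁻¹ * (π - -π) = 1 := by field_simp; ring
    rw [this, one_smul]
  · have hk : (k * Complex.I : ℂ) ≠ 0 := by simp [h]
    have := integral_exp_mul_complex (a := -π) (b := π) hk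
    simp only [ch]
    have e : ∀ θ : ℝ, (k * θ * Complex.I : ℂ) = k * Complex.I * θ := fun θ => by ring
    simp_rw [e]
    rw [this]
    have : Complex.exp (k * Complex.I * (π:ℝ)) = Complex.exp (k * Complex.I * (-π:ℝ)) := by
      rw [Complex.exp_eq_exp_iff_exists_int]
      exact ⟨k, by push_cast; ring⟩
    rw [this]; simp

noncomputable def phi (m : ℕ) (θ : Fin m → ℝ) : ℝ := (∑ i, 2 * Real.cos (θ i)) / (2 * m)

lemma phi_cont (m : ℕ) : Continuous (phi m) := by unfold phi; fun_prop

lemma phi_abs (m : ℕ) (θ : Fin m → ℝ) : |phi m θ| ≤ 1 := by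
  rw [phi, abs_div]
  apply div_le_one_of_le₀ _ (abs_nonneg _)
  calc |∑ i, 2 * Real.cos (θ i)| ≤ ∑ i, |2 * Real.cos (θ i)| := Finset.abs_sum_le_sum_abs _ _
    _ ≤ ∑ i : Fin m, (2:ℝ) := by
        gcongr with i
        rw [abs_mul, abs_two]
        linarith [Real.abs_cos_le_one (θ i)]
    _ = |(2 * m : ℝ)| := by
        rw [abs_of_nonneg (by positivity)]; simp; ring

noncomputable def chp {m : ℕ} (k : Fin m → ℤ) (θ : Fin m → ℝ) : ℂ := ∏ j, ch (k j) (θ j)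

lemma chp_cont {m : ℕ} (k : Fin m → ℤ) : Continuous (chp k) := by
  unfold chp
  exact continuous_finsetProd _ fun j _ => (ch_cont _).comp (continuous_apply j)

lemma chp_norm {m : ℕ} (k : Fin m → ℤ) (θ : Fin m → ℝ) : ‖chp k θ‖ = 1 := by
  simp [chp, ch_norm]

noncomputable abbrev nup (m : ℕ) : Measure (Fin m → ℝ) := Measure.pi fun _ => nu

lemma chp_update {m : ℕ} (x y : Fin m → ℤ) (i : Fin m) (a : ℤ) (θ : Fin m → ℝ) :
    chp (Function.update x i (x i + a) - y) θ = ch a (θ i) * chp (x - y) θ := by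
  unfold chp
  rw [← Finset.mul_prod_erase _ _ (Finset.mem_univ i), ← Finset.mul_prod_erase Finset.univ (fun j => ch ((x-y) j) (θ j)) (Finset.mem_univ i), ← mul_assoc]
  congr 1
  · rw [← ch_add]; congr 1; simp; ring
  · apply Finset.prod_congr rfl
    intro j hj
    simp [Finset.ne_of_mem_erase hj]

lemma integrable_of_bdd {m : ℕ} {f : (Fin m → ℝ) → ℂ} (hf : Continuous f) (h : ∀ θ, ‖f θ‖ ≤ 1) :
    Integrable f (nup m) :=
  Integrable.of_bound hf.aestronglyMeasurable 1 (Eventually.of_forall h)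

lemma chp_phi_integrable {m : ℕ} (k : Fin m → ℤ) (n : ℕ) :
    Integrable (fun θ => chp k θ * (phi m θ : ℂ) ^ n) (nup m) := by
  apply integrable_of_bdd
  · exact (chp_cont k).mul ((Complex.continuous_ofReal.comp (phi_cont m)).pow n)
  · intro θ
    rw [norm_mul, chp_norm, one_mul, norm_pow, Complex.norm_real]
    exact pow_le_one₀ (norm_nonneg _) (phi_abs m θ)

lemma srw_fourier (m : ℕ) (n : ℕ) (x y : Fin m → ℤ) :
    (srwKernel m n x y : ℂ) = ∫ θ, chp (x - y) θ * (phi m θ : ℂ) ^ n ∂(nup m) := by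
  induction n generalizing x with
  | zero =>
    simp only [srwKernel, pow_zero, mul_one, chp]
    rw [integral_fintype_prod_eq_prod (μ := fun _ => nu) (fun j θ => ch ((x - y) j) θ)]
    simp_rw [ch_int]
    split_ifs with h
    · simp [h]
    · obtain ⟨j, hj⟩ := Function.ne_iff.mp h
      rw [eq_comm, Complex.ofReal_zero]
      apply Finset.prod_eq_zero (Finset.mem_univ j)
      simp [sub_eq_zero, hj]
  | succ n ih =>
    simp only [srwKernel]
    push_cast
    simp_rw [sub_eq_add_neg (x _) 1, ih]
    simp_rw [← integral_add (chp_phi_integrable _ n) (chp_phi_integrable _ n)]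
    rw [← integral_finsetSum (f := fun i θ => chp (Function.update x i (x i + 1) - y) θ * (phi m θ : ℂ) ^ n + chp (Function.update x i (x i + -1) - y) θ * (phi m θ : ℂ) ^ n) _ fun i _ => (chp_phi_integrable _ n).add (chp_phi_integrable _ n)]
    rw [← integral_div]
    congr 1
    ext θ
    simp_rw [chp_update, ← add_mul, ch_one_add]
    rw [← Finset.sum_mul, ← Finset.sum_mul, pow_succ, phi]
    push_cast
    ring

noncomputable def q (t : ℝ) (k : ℤ) : ℝ := ∫ θ, Real.cos (k * θ) * Real.exp (-(t * (2 - 2 * Real.cos θ))) ∂nu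

open Real in
lemma q_complex (t : ℝ) (k : ℤ) :
    ∫ θ, ch k θ * ((Real.exp (-(t * (2 - 2 * Real.cos θ))) : ℝ) : ℂ) ∂nu = q t k := by
  rw [q, integral_nu, integral_nu]
  have e : ∀ θ : ℝ, ch k θ * ((Real.exp (-(t * (2 - 2 * Real.cos θ))) : ℝ) : ℂ)
    = ((Real.cos (k * θ) * Real.exp (-(t * (2 - 2 * Real.cos θ))) : ℝ) : ℂ) + ((Real.sin (k * θ) * Real.exp (-(t * (2 - 2 * Real.cos θ))) : ℝ) : ℂ) * Complex.I := by
    intro θ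
    have : (k * θ * Complex.I : ℂ) = ((k * θ : ℝ) : ℂ) * Complex.I := by push_cast; ring
    rw [ch, this, Complex.exp_mul_I]
    push_cast
    ring
  simp_rw [e]
  rw [intervalIntegral.integral_add, intervalIntegral.integral_mul_const, intervalIntegral.integral_ofReal, intervalIntegral.integral_ofReal]
  · have odd : ∫ x in (-π)..π, (Real.sin (k * x) * Real.exp (-(t * (2 - 2 * Real.cos x)))) = 0 := by
      have h1 := intervalIntegral.integral_comp_neg (a := -π) (b := π) (fun x => Real.sin (k * x) * Real.exp (-(t * (2 - 2 * Real.cos x))))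
      simp only [mul_neg, Real.sin_neg, Real.cos_neg, neg_mul, neg_neg, intervalIntegral.integral_neg] at h1
      linarith
    rw [odd]
    simp
  · apply Continuous.intervalIntegrable; fun_prop
  · apply Continuous.intervalIntegrable; fun_prop

lemma heat_eq_prod (m : ℕ) (hm : 0 < m) (t : ℝ) (x y : Fin m → ℤ) :
    heatKernel m t x y = ∏ j, q t (x j - y j) := by
  have key : HasSum (fun n : ℕ => ((Real.exp (-(2 * m) * t) * ((2 * m) * t) ^ n / n.factorial * srwKernel m n x y : ℝ) : ℂ))
      (∫ θ, chp (x - y) θ * ((∏ j, Real.exp (-(t * (2 - 2 * Real.cos (θ j)))) : ℝ) : ℂ) ∂(nup m)) := by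
    let F : ℕ → (Fin m → ℝ) → ℂ := fun n θ => ((Real.exp (-(2 * m) * t) * ((2 * m) * t) ^ n / n.factorial : ℝ) : ℂ) * (chp (x - y) θ * (phi m θ : ℂ) ^ n)
    have hF : ∀ n, Integrable (F n) (nup m) := fun n => (chp_phi_integrable _ n).const_mul _
    have hs : Summable fun n => ∫ θ, ‖F n θ‖ ∂(nup m) := by
      apply Summable.of_nonneg_of_le (fun n => integral_nonneg fun _ => norm_nonneg _) (f := fun n => Real.exp (-(2 * m) * t) * (|(2 * m) * t| ^ n / n.factorial))
      · intro n
        have : ∀ θ, ‖F n θ‖ ≤ Real.exp (-(2 * m) * t) * (|(2 * m) * t| ^ n / n.factorial) := by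
          intro θ
          simp only [F]
          rw [norm_mul, norm_mul, chp_norm, one_mul, norm_pow, Complex.norm_real, Complex.norm_real]
          rw [Real.norm_eq_abs, abs_div, abs_mul, abs_pow, Real.abs_exp, Nat.abs_cast, mul_div_assoc]
          exact mul_le_of_le_one_right (by positivity) (pow_le_one₀ (norm_nonneg _) (phi_abs m θ))
        calc ∫ θ, ‖F n θ‖ ∂(nup m) ≤ ∫ θ, Real.exp (-(2 * m) * t) * (|(2 * m) * t| ^ n / n.factorial) ∂(nup m) :=
              integral_mono (hF n).norm (integrable_const _) this
          _ = _ := by simp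
      · exact (Real.summable_pow_div_factorial _).mul_left _
    have h := hasSum_integral_of_summable_integral_norm hF hs
    have e1 : (fun n : ℕ => ((Real.exp (-(2 * m) * t) * ((2 * m) * t) ^ n / n.factorial * srwKernel m n x y : ℝ) : ℂ)) = fun n => ∫ θ, F n θ ∂(nup m) := by
      ext n
      simp only [F]
      rw [integral_const_mul, ← srw_fourier, Complex.ofReal_mul]
    rw [e1]
    have e3 : (∫ θ, chp (x - y) θ * ((∏ j, Real.exp (-(t * (2 - 2 * Real.cos (θ j)))) : ℝ) : ℂ) ∂(nup m)) = ∫ a, ∑' i, F i a ∂(nup m) := by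
      apply integral_congr_ae
      refine Eventually.of_forall fun θ => ?_
      simp only
      have : (∏ j, Real.exp (-(t * (2 - 2 * Real.cos (θ j))))) = Real.exp (-(2 * m) * t) * Real.exp ((2 * m) * t * phi m θ) := by
        rw [← Real.exp_sum, ← Real.exp_add]
        congr 1
        rw [phi]
        have hm' : (m : ℝ) ≠ 0 := by positivity
        field_simp
        simp only [Finset.sum_neg_distrib, ← Finset.mul_sum, Finset.sum_sub_distrib]
        simp
        ring
      rw [this]
      have h2 := (NormedSpace.expSeries_div_hasSum_exp (𝔸 := ℂ) (((2 * m) * t * phi m θ : ℝ) : ℂ))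
      rw [← Complex.exp_eq_exp_ℂ] at h2
      have h3 := (h2.mul_left (((Real.exp (-(2 * m) * t)) : ℂ))).mul_left (chp (x - y) θ)
      rw [← Complex.ofReal_exp, ← Complex.ofReal_mul] at h3
      rw [← h3.tsum_eq]
      apply tsum_congr
      intro n
      simp only [F]
      push_cast
      rw [mul_pow]
      ring
    rw [e3]
    exact h
  have e2 : (∫ θ, chp (x - y) θ * ((∏ j, Real.exp (-(t * (2 - 2 * Real.cos (θ j)))) : ℝ) : ℂ) ∂(nup m)) = ((∏ j, q t (x j - y j) : ℝ) : ℂ) := by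
    push_cast
    simp_rw [← q_complex]
    rw [← integral_fintype_prod_eq_prod (μ := fun _ => nu) (fun j (θ : ℝ) => ch (x j - y j) θ * ((Real.exp (-(t * (2 - 2 * Real.cos θ))) : ℝ) : ℂ))]
    congr 1
    ext θ
    rw [Finset.prod_mul_distrib]
    simp [chp]
  rw [e2] at key
  have := Complex.hasSum_ofReal.mp key
  exact this.tsum_eq
end RWRS

open MeasureTheory ProbabilityTheory Filter Set
namespace RWRS
open Real in
lemma nu_le (f g : ℝ → ℝ) (hf : Continuous f) (hg : Integrable g) (hg0 : ∀ x, 0 ≤ g x)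
    (h : ∀ x, |x| ≤ π → f x ≤ g x) : ∫ x, f x ∂nu ≤ (2*π)⁻¹ * ∫ x, g x := by
  rw [integral_nu, smul_eq_mul, intervalIntegral.integral_of_le (by linarith [pi_pos])]
  gcongr
  calc ∫ x in Ioc (-π) π, f x ≤ ∫ x in Ioc (-π) π, g x := by
        apply setIntegral_mono_on (hf.integrableOn_Ioc) hg.integrableOn measurableSet_Ioc
        intro x hx
        exact h x (abs_le.mpr ⟨hx.1.le, hx.2⟩)
    _ ≤ _ := setIntegral_le_integral hg (Eventually.of_forall hg0)

open Real in
lemma exp_bd (t x : ℝ) (ht : 0 ≤ t) (hx : |x| ≤ π) :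
    Real.exp (-(t * (2 - 2 * Real.cos x))) ≤ Real.exp (-(4 * t / π^2) * x^2) := by
  apply Real.exp_le_exp.mpr
  have := Real.cos_le_one_sub_mul_cos_sq hx
  have h2 : t * (2 * (2 / π ^ 2 * x ^ 2)) ≤ t * (2 - 2 * Real.cos x) := by gcongr; linarith
  have e : t * (2 * (2 / π ^ 2 * x ^ 2)) = (4 * t / π^2) * x^2 := by ring
  linarith

lemma int_nu (f : ℝ → ℝ) (hf : Continuous f) : Integrable f nu := by
  unfold nu
  apply Integrable.smul_measure
  · exact hf.integrableOn_Ioc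
  · simp [Real.pi_pos]

open Real in
lemma q_abs_le (t : ℝ) (k : ℤ) : |q t k| ≤ q t 0 := by
  unfold q
  apply (abs_integral_le_integral_abs).trans
  apply integral_mono
  · exact int_nu _ (by fun_prop)
  · exact int_nu _ (by fun_prop)
  · intro x
    simp only [abs_mul, abs_exp]
    simp
    exact mul_le_of_le_one_left (exp_pos _).le (abs_cos_le_one _)

open Real in
lemma q_zero_le : ∃ C > 0, ∀ t > 0, q t 0 ≤ C * t ^ (-(1/2) : ℝ) := by
  refine ⟨(2*π)⁻¹ * √(π/(4/π^2)), by positivity, fun t ht => ?_⟩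
  have hb : 0 < 4 * t / π^2 := by positivity
  have := nu_le (fun x => Real.cos ((0:ℤ) * x) * Real.exp (-(t * (2 - 2 * Real.cos x)))) (fun x => Real.exp (-(4 * t / π^2) * x^2))
    (by fun_prop) (integrable_exp_neg_mul_sq hb) (fun x => (exp_pos _).le) (fun x hx => by
      simpa using exp_bd t x ht.le hx)
  rw [integral_gaussian] at this
  refine this.trans (le_of_eq ?_)
  rw [mul_assoc]
  congr 1
  rw [Real.rpow_neg ht.le, ← Real.sqrt_eq_rpow, ← Real.sqrt_inv, ← Real.sqrt_mul (by positivity)]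
  congr 1
  field_simp

open Real in
lemma q_diff (t : ℝ) (ht : 0 < t) (k : ℤ) :
    q t 0 - q t k ≤ (2*π)⁻¹ * (k^2 / (4 * t / π^2) * √(π/((4 * t / π^2)/2))) := by
  have hb : 0 < 4 * t / π^2 := by positivity
  set b := 4 * t / π^2 with hbdef
  unfold q
  rw [← integral_sub (int_nu _ (by fun_prop)) (int_nu _ (by fun_prop)), ← integral_gaussian, ← integral_const_mul]
  apply nu_le
  · fun_prop
  · exact (integrable_exp_neg_mul_sq (by positivity)).const_mul _
  · intro x; positivity
  · intro x hx
    have h1 := exp_bd t x ht.le hx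
    rw [← hbdef] at h1
    have h2 : 1 - cos (k * x) ≤ (k * x)^2/2 := by linarith [one_sub_sq_div_two_le_cos (x := k * x)]
    have h3 : b / 2 * x^2 ≤ exp (b/2 * x^2) := by linarith [add_one_le_exp (b/2 * x^2)]
    have h4 : exp (-b * x^2) = exp (-(b/2) * x^2) * exp (-(b/2) * x^2) := by
      rw [← exp_add]; ring_nf
    have h5 : b / 2 * x^2 * exp (-(b/2) * x^2) ≤ 1 := by
      have : exp (b/2 * x^2) * exp (-(b/2) * x^2) = 1 := by rw [← exp_add]; ring_nf; simp
      calc _ ≤ exp (b/2 * x^2) * exp (-(b/2) * x^2) := by gcongr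
        _ = 1 := this
    calc _ = (1 - cos (k*x)) * Real.exp (-(t * (2 - 2 * Real.cos x))) := by simp; ring
      _ ≤ (k * x)^2/2 * exp (-b * x^2) := by
        gcongr
      _ = (k^2/b) * exp (-(b/2) * x^2) * (b / 2 * x^2 * exp (-(b/2) * x^2)) := by
        rw [h4]; field_simp
      _ ≤ (k^2/b) * exp (-(b/2) * x^2) * 1 := by gcongr
      _ = _ := by ring

open Real in
lemma q_zero_ge (t : ℝ) (ht : 1 ≤ t) : (2*π)⁻¹ * (2 * exp (-1)) * t ^ (-(1/2) : ℝ) ≤ q t 0 := by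
  have hs : (1:ℝ) ≤ √t := Real.one_le_sqrt.mpr ht
  have hs' : 0 < √t := by positivity
  have hi : (√t)⁻¹ ≤ π := (inv_le_one_of_one_le₀ hs).trans (by linarith [pi_gt_three])
  unfold q
  rw [integral_nu, smul_eq_mul, mul_assoc]
  gcongr
  rw [Real.rpow_neg (by linarith), ← Real.sqrt_eq_rpow]
  have h1 : ∫ x in (-(√t)⁻¹)..(√t)⁻¹, exp (-1) = 2 * exp (-1) * (√t)⁻¹ := by
    rw [intervalIntegral.integral_const, smul_eq_mul]; ring
  rw [← h1]
  have hp : 0 < (√t)⁻¹ := by positivity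
  rw [intervalIntegral.integral_of_le (by linarith), intervalIntegral.integral_of_le (by linarith [pi_pos])]
  have hc : Continuous fun x : ℝ => cos ((0:ℤ) * x) * exp (-(t * (2 - 2 * cos x))) := by fun_prop
  calc _ ≤ ∫ x in Ioc (-(√t)⁻¹) (√t)⁻¹, cos ((0:ℤ) * x) * exp (-(t * (2 - 2 * cos x))) := by
        apply setIntegral_mono_on (by simp) hc.integrableOn_Ioc measurableSet_Ioc
        intro x hx
        simp
        have h2 := one_sub_sq_div_two_le_cos (x := x)
        have h3 : x^2 ≤ t⁻¹ := by
          have : |x| ≤ (√t)⁻¹ := abs_le.mpr ⟨hx.1.le, hx.2⟩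
          calc x^2 = |x|^2 := (sq_abs x).symm
            _ ≤ ((√t)⁻¹)^2 := by gcongr
            _ = t⁻¹ := by rw [inv_pow, Real.sq_sqrt (by linarith)]
        calc t * (2 - 2 * cos x) ≤ t * t⁻¹ := by gcongr; linarith
          _ = 1 := by field_simp
    _ ≤ _ := by
        apply setIntegral_mono_set hc.integrableOn_Ioc
        · refine Eventually.of_forall fun x => ?_
          simp; positivity
        · exact (Ioc_subset_Ioc (by linarith) hi).eventuallyLE

open Real in
lemma q_lower : ∃ c1 > 0, ∃ c > 0, ∀ t ≥ 1, ∀ k : ℤ, |(k:ℝ)| ≤ c1 * √t → c * t ^ (-(1/2) : ℝ) ≤ q t k := by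
  set K : ℝ := π^2/4 * √(π/((4 / π^2)/2)) with hK
  have hKpos : 0 < K := by positivity
  refine ⟨√(exp (-1) / K), by positivity, (2*π)⁻¹ * exp (-1), by positivity, fun t ht k hk => ?_⟩
  have ht0 : 0 < t := by linarith
  have h1 := q_diff t ht0 k
  have h2 := q_zero_ge t ht
  have hk2 : (k:ℝ)^2 ≤ exp (-1) / K * t := by
    rw [← sq_abs]
    calc |(k:ℝ)|^2 ≤ (√(exp (-1) / K) * √t)^2 := by gcongr
      _ = _ := by rw [mul_pow, sq_sqrt (by positivity), sq_sqrt ht0.le]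
  have e : √(π/((4 * t / π^2)/2)) = √(π/((4 / π^2)/2)) * t ^ (-(1/2) : ℝ) := by
    rw [Real.rpow_neg ht0.le, ← Real.sqrt_eq_rpow, ← Real.sqrt_inv, ← Real.sqrt_mul (by positivity)]
    congr 1
    field_simp
  have h3 : (k^2 / (4 * t / π^2) * √(π/((4 * t / π^2)/2))) ≤ exp (-1) * t ^ (-(1/2) : ℝ) := by
    rw [e]
    calc (k^2 / (4 * t / π^2) * (√(π/((4 / π^2)/2)) * t ^ (-(1/2) : ℝ))) ≤ ((exp (-1) / K * t) / (4 * t / π^2) * (√(π/((4 / π^2)/2)) * t ^ (-(1/2) : ℝ))) := by gcongr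
      _ = exp (-1) / K * (π^2/4 * √(π/((4 / π^2)/2))) * t ^ (-(1/2) : ℝ) := by field_simp
      _ = _ := by rw [← hK]; field_simp
  have h4 : (2*π)⁻¹ * (k^2 / (4 * t / π^2) * √(π/((4 * t / π^2)/2))) ≤ (2*π)⁻¹ * (exp (-1) * t ^ (-(1/2) : ℝ)) := by gcongr
  linarith

lemma q_neg (t : ℝ) (k : ℤ) : q t (-k) = q t k := by
  unfold q; congr 1; ext θ; push_cast; rw [neg_mul, Real.cos_neg]

lemma heat_symm (m : ℕ) (hm : 0 < m) (t : ℝ) (x y : Fin m → ℤ) :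
    heatKernel m t x y = heatKernel m t y x := by
  rw [heat_eq_prod m hm, heat_eq_prod m hm]
  refine Finset.prod_congr rfl fun j _ => ?_
  rw [← q_neg]; congr 1; ring

lemma heat_diag (m : ℕ) (hm : 0 < m) (t : ℝ) (x y : Fin m → ℤ) :
    heatKernel m t x x = heatKernel m t y y := by
  rw [heat_eq_prod m hm, heat_eq_prod m hm]
  simp

lemma heat_upper (m : ℕ) (hm : 0 < m) : ∃ C > 0, ∀ t > 0, ∀ x y : Fin m → ℤ,
    heatKernel m t x y ≤ C * t ^ (-(m/2) : ℝ) := by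
  obtain ⟨C, hC, h⟩ := q_zero_le
  refine ⟨C^m, by positivity, fun t ht x y => ?_⟩
  rw [heat_eq_prod m hm]
  calc ∏ j, q t (x j - y j) ≤ |∏ j, q t (x j - y j)| := le_abs_self _
    _ = ∏ j, |q t (x j - y j)| := Finset.abs_prod _ _
    _ ≤ ∏ j : Fin m, (C * t ^ (-(1/2) : ℝ)) :=
      Finset.prod_le_prod (fun _ _ => abs_nonneg _) fun j _ => (q_abs_le _ _).trans (h t ht)
    _ = _ := by
      rw [Finset.prod_const, Finset.card_univ, Fintype.card_fin, mul_pow, ← Real.rpow_natCast (t ^ _) m, ← Real.rpow_mul ht.le]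
      congr 2; ring

lemma heat_lower (m : ℕ) (hm : 0 < m) : ∃ c1 > 0, ∃ c > 0, ∀ t ≥ 1, ∀ x y : Fin m → ℤ,
    (∀ j, |((x j - y j : ℤ) : ℝ)| ≤ c1 * √t) → c * t ^ (-(m/2) : ℝ) ≤ heatKernel m t x y := by
  obtain ⟨c1, hc1, c, hc, h⟩ := q_lower
  refine ⟨c1, hc1, c^m, by positivity, fun t ht x y hxy => ?_⟩
  have ht0 : 0 < t := by linarith
  rw [heat_eq_prod m hm]
  calc _ = ∏ j : Fin m, (c * t ^ (-(1/2) : ℝ)) := by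
        rw [Finset.prod_const, Finset.card_univ, Fintype.card_fin, mul_pow, ← Real.rpow_natCast (t ^ _) m, ← Real.rpow_mul ht0.le]
        congr 2; ring
    _ ≤ _ := Finset.prod_le_prod (fun _ _ => by positivity) fun j _ => h t ht _ (hxy j)

lemma srw_nonneg (m n : ℕ) (x y : Fin m → ℤ) : 0 ≤ srwKernel m n x y := by
  induction n generalizing x with
  | zero => simp only [srwKernel]; split_ifs <;> simp
  | succ n ih =>
    simp only [srwKernel]
    apply div_nonneg _ (by positivity)
    exact Finset.sum_nonneg fun i _ => add_nonneg (ih _) (ih _)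

lemma srw_le_one (m n : ℕ) (x y : Fin m → ℤ) : srwKernel m n x y ≤ 1 := by
  induction n generalizing x with
  | zero => simp only [srwKernel]; split_ifs <;> simp
  | succ n ih =>
    simp only [srwKernel]
    apply div_le_one_of_le₀ _ (by positivity)
    calc _ ≤ ∑ i : Fin m, ((1:ℝ) + 1) := Finset.sum_le_sum fun i _ => add_le_add (ih _) (ih _)
      _ = _ := by simp; ring

lemma heat_diag_lower (m : ℕ) (t : ℝ) (ht : 0 ≤ t) (x : Fin m → ℤ) :
    Real.exp (-(2 * m) * t) ≤ heatKernel m t x x := by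
  have hs : Summable fun n : ℕ => Real.exp (-(2 * m) * t) * ((2 * m) * t) ^ n / n.factorial * srwKernel m n x x := by
    apply Summable.of_nonneg_of_le (f := fun n : ℕ => Real.exp (-(2 * m) * t) * (((2 * m) * t) ^ n / n.factorial))
    · intro n; have := srw_nonneg m n x x; positivity
    · intro n
      rw [← mul_div_assoc]
      exact mul_le_of_le_one_right (by positivity) (srw_le_one _ _ _ _)
    · exact (Real.summable_pow_div_factorial _).mul_left _
  have := hs.le_tsum 0 (fun n _ => by have := srw_nonneg m n x x; positivity)
  simpa [srwKernel, heatKernel] using this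
end RWRS

open MeasureTheory ProbabilityTheory Filter Set
namespace RWRS
open scoped ENNReal

noncomputable def kap {d : ℕ} {Ω : Type*} [MeasurableSpace Ω]
    (P : (Fin d → ℤ) → Measure Ω) (S : ℝ → Ω → (Fin d → ℤ)) (u : ℝ) (x y : Fin d → ℤ) : ℝ≥0∞ :=
  P x {ω | S u ω = y}

section
variable {d : ℕ} {Ω : Type*} [MeasurableSpace Ω]
    {P : (Fin d → ℤ) → Measure Ω} {S : ℝ → Ω → (Fin d → ℤ)}

lemma heat_nonneg (m : ℕ) (t : ℝ) (ht : 0 ≤ t) (x y : Fin m → ℤ) : 0 ≤ heatKernel m t x y := by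
  apply tsum_nonneg
  intro n; have := srw_nonneg m n x y; positivity

lemma measS (hS : IsCTSRW d P S) (u : ℝ) : Measurable (S u) :=
  hS.meas.comp measurable_prodMk_left

lemma kap_eq (hS : IsCTSRW d P S) {u : ℝ} (hu : 0 ≤ u) (x y : Fin d → ℤ) :
    kap P S u x y = ENNReal.ofReal (heatKernel d u x y) := by
  have := hS.prob x
  have h := hS.fdd x 0 (fun _ => u) hu (fun i => i.elim0) (fun _ => y)
  simp at h
  rw [← h, ENNReal.ofReal_toReal (measure_ne_top _ _)]
  rfl

lemma fdd' (hS : IsCTSRW d P S) (x : Fin d → ℤ) (n : ℕ) (t : Fin (n + 1) → ℝ) (h0 : 0 ≤ t 0)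
    (ht : ∀ i : Fin n, t i.castSucc ≤ t i.succ) (y : Fin (n + 1) → (Fin d → ℤ)) :
    P x {ω | ∀ i, S (t i) ω = y i} = kap P S (t 0) x (y 0) *
      ∏ i : Fin n, kap P S (t i.succ - t i.castSucc) (y i.castSucc) (y i.succ) := by
  have := hS.prob x
  have h := hS.fdd x n t h0 ht y
  rw [← ENNReal.ofReal_toReal (measure_ne_top (P x) {ω | ∀ i, S (t i) ω = y i}), h,
    ENNReal.ofReal_mul (heat_nonneg _ _ h0 _ _), ENNReal.ofReal_prod_of_nonneg]
  · rw [kap_eq hS h0]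
    congr 1
    refine Finset.prod_congr rfl fun i _ => ?_
    rw [kap_eq hS (sub_nonneg.mpr (ht i))]
  · intro i _
    exact heat_nonneg _ _ (sub_nonneg.mpr (ht i)) _ _

lemma markov1 (hS : IsCTSRW d P S) (x : Fin d → ℤ) (n : ℕ) (t : Fin (n + 1) → ℝ) (h0 : 0 ≤ t 0)
    (ht : ∀ i : Fin n, t i.castSucc ≤ t i.succ) (y : Fin (n + 1) → (Fin d → ℤ)) (r : ℝ)
    (hr : t (Fin.last n) ≤ r) (w : Fin d → ℤ) :
    P x {ω | (∀ i, S (t i) ω = y i) ∧ S r ω = w} = P x {ω | ∀ i, S (t i) ω = y i} *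
      kap P S (r - t (Fin.last n)) (y (Fin.last n)) w := by
  have h := fdd' hS x (n+1) (Fin.snoc (α := fun _ => ℝ) t r) (by simpa [Fin.snoc] using h0) (by
    intro i
    refine Fin.lastCases ?_ (fun j => ?_) i
    · rw [Fin.snoc_castSucc, Fin.succ_last, Fin.snoc_last]; exact hr
    · rw [Fin.snoc_castSucc, ← Fin.castSucc_succ, Fin.snoc_castSucc]; exact ht j) (Fin.snoc (α := fun _ => (Fin d → ℤ)) y w)
  rw [fdd' hS x n t h0 ht y]
  rw [Fin.prod_univ_castSucc] at h
  have e0 : (0 : Fin (n+2)) = (0 : Fin (n+1)).castSucc := rfl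
  simp only [e0, Fin.snoc_castSucc, Fin.succ_last, Fin.snoc_last, ← Fin.castSucc_succ] at h
  rw [← mul_assoc] at h
  rw [← h]
  congr 1
  ext ω
  simp only [mem_ofPred_eq]
  constructor
  · rintro ⟨h1, h2⟩ i
    refine Fin.lastCases ?_ (fun j => ?_) i
    · simpa using h2
    · simpa using h1 j
  · intro hh
    refine ⟨fun i => ?_, ?_⟩
    · simpa using hh i.castSucc
    · simpa using hh (Fin.last _)

lemma measPath (hS : IsCTSRW d P S) {n : ℕ} (t : Fin n → ℝ) : Measurable fun ω => fun i => S (t i) ω :=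
  measurable_pi_lambda _ fun i => measS hS (t i)

lemma markovB (hS : IsCTSRW d P S) (x : Fin d → ℤ) (n : ℕ) (t : Fin (n + 1) → ℝ) (h0 : 0 ≤ t 0)
    (ht : ∀ i : Fin n, t i.castSucc ≤ t i.succ) (B : Set (Fin (n + 1) → (Fin d → ℤ)))
    (y : Fin d → ℤ) (hB : ∀ a ∈ B, a (Fin.last n) = y) (r : ℝ)
    (hr : t (Fin.last n) ≤ r) (w : Fin d → ℤ) :
    P x {ω | (fun i => S (t i) ω) ∈ B ∧ S r ω = w} = P x {ω | (fun i => S (t i) ω) ∈ B} *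
      kap P S (r - t (Fin.last n)) y w := by
  have hm := measPath hS t
  have hW : MeasurableSet {ω | S r ω = w} := measS hS r (measurableSet_singleton w)
  have h1 := tsum_measure_preimage_singleton (μ := P x) (B.to_countable) (f := fun ω => fun i => S (t i) ω)
    (fun a _ => hm (measurableSet_singleton a))
  have h2 := tsum_measure_preimage_singleton (μ := (P x).restrict {ω | S r ω = w}) (B.to_countable) (f := fun ω => fun i => S (t i) ω)
    (fun a _ => hm (measurableSet_singleton a))
  have e1 : {ω | (fun i => S (t i) ω) ∈ B} = (fun ω => fun i => S (t i) ω) ⁻¹' B := rfl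
  have e2 : {ω | (fun i => S (t i) ω) ∈ B ∧ S r ω = w} = ((fun ω => fun i => S (t i) ω) ⁻¹' B) ∩ {ω | S r ω = w} := rfl
  rw [e1, e2, ← Measure.restrict_apply' hW, ← h1, ← h2, ← ENNReal.tsum_mul_right]
  apply tsum_congr
  intro a
  rw [Measure.restrict_apply' hW]
  have := markov1 hS x n t h0 ht a r hr w
  rw [hB a a.2] at this
  have e3 : ((fun ω => fun i => S (t i) ω) ⁻¹' {a.1}) = {ω | ∀ i, S (t i) ω = a.1 i} := by
    ext ω; simp [funext_iff]
  rw [e3, ← this]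
  rfl

lemma markovB2 (hS : IsCTSRW d P S) (x : Fin d → ℤ) (n : ℕ) (t : Fin (n + 1) → ℝ) (h0 : 0 ≤ t 0)
    (ht : ∀ i : Fin n, t i.castSucc ≤ t i.succ) (B : Set (Fin (n + 1) → (Fin d → ℤ)))
    (y : Fin d → ℤ) (hB : ∀ a ∈ B, a (Fin.last n) = y) (r r' : ℝ)
    (hr : t (Fin.last n) ≤ r) (hr' : r ≤ r') (v w : Fin d → ℤ) :
    P x {ω | ((fun i => S (t i) ω) ∈ B ∧ S r ω = v) ∧ S r' ω = w} = P x {ω | (fun i => S (t i) ω) ∈ B} *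
      kap P S (r - t (Fin.last n)) y v * kap P S (r' - r) v w := by
  rw [← markovB hS x n t h0 ht B y hB r hr v]
  have h := markovB hS x (n+1) (Fin.snoc (α := fun _ => ℝ) t r) (by simpa [Fin.snoc] using h0) (by
    intro i
    refine Fin.lastCases ?_ (fun j => ?_) i
    · rw [Fin.snoc_castSucc, Fin.succ_last, Fin.snoc_last]; exact hr
    · rw [Fin.snoc_castSucc, ← Fin.castSucc_succ, Fin.snoc_castSucc]; exact ht j)
    {a | (fun i : Fin (n+1) => a i.castSucc) ∈ B ∧ a (Fin.last _) = v} v (fun a ha => ha.2) r' (by simpa using hr') w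
  simpa using h

lemma two_time (hS : IsCTSRW d P S) (x : Fin d → ℤ) {r r' : ℝ} (h0 : 0 ≤ r) (h : r ≤ r') (v w : Fin d → ℤ) :
    P x {ω | S r ω = v ∧ S r' ω = w} = kap P S r x v * kap P S (r' - r) v w := by
  have := markov1 hS x 0 (fun _ => r) h0 (fun i => i.elim0) (fun _ => v) r' h w
  simpa [kap] using this

lemma kap_meas (hS : IsCTSRW d P S) (x y : Fin d → ℤ) : Measurable fun u => kap P S u x y := by
  have := hS.prob x
  have hs : MeasurableSet {p : ℝ × Ω | S p.1 p.2 = y} := hS.meas (measurableSet_singleton y)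
  exact measurable_measure_prodMk_left hs

lemma kap_le_one (hS : IsCTSRW d P S) (u : ℝ) (x y : Fin d → ℤ) : kap P S u x y ≤ 1 := by
  have := hS.prob x
  exact prob_le_one

lemma kap_sum (hS : IsCTSRW d P S) (u : ℝ) (x : Fin d → ℤ) : ∑' y, kap P S u x y = 1 := by
  have := hS.prob x
  have h1 := tsum_measure_preimage_singleton (μ := P x) (s := univ) (countable_univ) (f := S u)
    (fun a _ => measS hS u (measurableSet_singleton a))
  rw [preimage_univ, measure_univ, tsum_univ (f := fun y => P x (S u ⁻¹' {y}))] at h1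
  exact h1

lemma kap_diag_lower (hS : IsCTSRW d P S) {u : ℝ} (hu : 0 ≤ u) (hu1 : u ≤ 1) (y : Fin d → ℤ) :
    ENNReal.ofReal (Real.exp (-(2 * d))) ≤ kap P S u y y := by
  rw [kap_eq hS hu]
  apply ENNReal.ofReal_le_ofReal
  refine le_trans ?_ (heat_diag_lower d u hu y)
  apply Real.exp_le_exp.mpr
  have : (2 * d : ℝ) * u ≤ 2 * d * 1 := by gcongr
  linarith

lemma kap_ck (hS : IsCTSRW d P S) {s u : ℝ} (hs : 0 ≤ s) (hu : 0 ≤ u) (x w y : Fin d → ℤ) :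
    kap P S s x w * kap P S u w y ≤ kap P S (s + u) x y := by
  have := two_time hS x hs (by linarith : s ≤ s + u) w y
  rw [add_sub_cancel_left] at this
  rw [← this]
  exact measure_mono fun ω h => h.2

/-- first-hit skeleton bound -/
lemma hit_skel (hS : IsCTSRW d P S) (x y w : Fin d → ℤ) (t : ℝ) (ht : 0 < t) (N : ℕ) (hN : 0 < N) :
    P x {ω | (∃ i : ℕ, i ≤ N ∧ S (i * (t / N)) ω = y) ∧ S t ω = w} ≤
      ENNReal.ofReal (Real.exp (4 * d)) * ∫⁻ u in Ioc 0 (t+1), kap P S u x y * kap P S (t + 1 - u) y w := by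
  set δ := t / N with hδ
  have hN' : (0:ℝ) < N := by exact_mod_cast hN
  have hδ0 : 0 < δ := by positivity
  have hle : ∀ i : ℕ, i ≤ N → i * δ ≤ t := by
    intro i hi
    have : (i:ℝ) ≤ N := by exact_mod_cast hi
    calc i * δ ≤ N * δ := by gcongr
      _ = t := by rw [hδ]; field_simp
  let tt : (i : ℕ) → Fin (i+1) → ℝ := fun i j => (j : ℕ) * δ
  let B : (i : ℕ) → Set (Fin (i+1) → (Fin d → ℤ)) := fun i => {a | (∀ j : Fin i, a j.castSucc ≠ y) ∧ a (Fin.last i) = y}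
  let E : ℕ → Set Ω := fun i => {ω | (fun j => S (tt i j) ω) ∈ B i}
  have hEmeas : ∀ i, MeasurableSet (E i) := fun i => measPath hS (tt i) (MeasurableSet.of_discrete (s := B i))
  have hE : ∀ i ω, ω ∈ E i ↔ (∀ j < i, S (j * δ) ω ≠ y) ∧ S (i * δ) ω = y := by
    intro i ω
    simp only [E, B, tt, mem_ofPred_eq, Fin.val_castSucc, Fin.val_last]
    constructor
    · rintro ⟨h1, h2⟩; exact ⟨fun j hj => h1 ⟨j, hj⟩, h2⟩
    · rintro ⟨h1, h2⟩; exact ⟨fun j => h1 j j.2, h2⟩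
  have hEd : Pairwise (Function.onFun Disjoint E) := by
    intro i j hij
    rw [Function.onFun, Set.disjoint_left]
    intro ω hi hj
    rw [hE] at hi hj
    rcases lt_or_gt_of_ne hij with h | h
    · exact hj.1 i h hi.2
    · exact hi.1 j h hj.2
  have htt0 : ∀ i, 0 ≤ tt i 0 := fun i => by simp [tt]
  have httm : ∀ i, ∀ j : Fin i, tt i j.castSucc ≤ tt i j.succ := by
    intro i j; simp only [tt, Fin.val_castSucc, Fin.val_succ]; push_cast; gcongr; simp
  have httl : ∀ i, tt i (Fin.last i) = i * δ := fun i => by simp [tt]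
  have hsub : {ω | (∃ i : ℕ, i ≤ N ∧ S (i * δ) ω = y) ∧ S t ω = w} ⊆ ⋃ i ∈ Finset.range (N+1), {ω | ω ∈ E i ∧ S t ω = w} := by
    rintro ω ⟨⟨i, hi, hy⟩, hw⟩
    classical
    have hex : ∃ i : ℕ, S (i * δ) ω = y := ⟨i, hy⟩
    simp only [mem_iUnion, Finset.mem_range]
    refine ⟨Nat.find hex, ?_, ?_, hw⟩
    · have := Nat.find_min' hex hy; omega
    · rw [hE]; exact ⟨fun j hj => Nat.find_min hex hj, Nat.find_spec hex⟩
  set c := ENNReal.ofReal (Real.exp (-(2 * d))) with hc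
  have hcc : ENNReal.ofReal (Real.exp (4 * d)) * (c * c) = 1 := by
    rw [hc, ← ENNReal.ofReal_mul (by positivity), ← ENNReal.ofReal_mul (by positivity), ← Real.exp_add, ← Real.exp_add]
    ring_nf; simp
  have key : c * c * ∑ i ∈ Finset.range (N+1), P x (E i) * kap P S (t - i * δ) y w ≤ ∫⁻ u in Ioc 0 (t+1), kap P S u x y * kap P S (t + 1 - u) y w := by
    calc c * c * ∑ i ∈ Finset.range (N+1), P x (E i) * kap P S (t - i * δ) y w
        = ∑ i ∈ Finset.range (N+1), ∫⁻ u in Ioc 0 (t+1), (Ioc (i * δ) (i*δ+1)).indicator (fun _ => P x (E i) * c * (c * kap P S (t - i * δ) y w)) u := by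
          rw [Finset.mul_sum]
          refine Finset.sum_congr rfl fun i hi => ?_
          have hi' := hle i (by simpa [Nat.lt_succ_iff] using hi)
          rw [lintegral_indicator measurableSet_Ioc, Measure.restrict_restrict measurableSet_Ioc, setLIntegral_const]
          have : Ioc (i * δ) (i*δ+1) ∩ Ioc 0 (t+1) = Ioc (i * δ) (i*δ+1) := by
            apply inter_eq_left.mpr
            exact Ioc_subset_Ioc (by positivity) (by linarith)
          rw [this, Real.volume_Ioc]
          simp
          ring
      _ = ∫⁻ u in Ioc 0 (t+1), ∑ i ∈ Finset.range (N+1), (Ioc (i * δ) (i*δ+1)).indicator (fun _ => P x (E i) * c * (c * kap P S (t - i * δ) y w)) u := by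
          rw [lintegral_finsetSum]
          intro i _
          exact measurable_const.indicator measurableSet_Ioc
      _ ≤ ∫⁻ u in Ioc 0 (t+1), kap P S u x y * kap P S (t + 1 - u) y w := by
          apply setLIntegral_mono' measurableSet_Ioc
          intro u hu
          rw [← two_time hS x hu.1.le hu.2 y w]
          calc _ ≤ ∑ i ∈ Finset.range (N+1), P x (E i ∩ {ω | S u ω = y ∧ S (t+1) ω = w}) := by
                refine Finset.sum_le_sum fun i hi => ?_
                have hi' := hle i (by simpa [Nat.lt_succ_iff] using hi)
                by_cases hui : u ∈ Ioc (i * δ) (i*δ+1)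
                · rw [indicator_of_mem hui]
                  have := markovB2 hS x i (tt i) (htt0 i) (httm i) (B i) y (fun a ha => ha.2) u (t+1) (by rw [httl]; exact hui.1.le) hu.2 y w
                  rw [httl] at this
                  have e : E i ∩ {ω | S u ω = y ∧ S (t+1) ω = w} = {ω | ((fun j => S (tt i j) ω) ∈ B i ∧ S u ω = y) ∧ S (t+1) ω = w} := by
                    ext ω; simp only [E, mem_inter_iff, mem_ofPred_eq, and_assoc]
                  rw [e, this]
                  gcongr
                  · exact kap_diag_lower hS (by linarith [hui.1]) (by linarith [hui.2]) y
                  · have h1 := kap_ck hS (s := i * δ + 1 - u) (u := t - i * δ) (by linarith [hui.2]) (by linarith) y y w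
                    have h2 : i * δ + 1 - u + (t - i * δ) = t + 1 - u := by ring
                    rw [h2] at h1
                    refine le_trans ?_ h1
                    gcongr
                    exact kap_diag_lower hS (by linarith [hui.2]) (by linarith [hui.1]) y
                · rw [indicator_of_notMem hui]; exact zero_le
            _ = P x (⋃ i ∈ Finset.range (N+1), E i ∩ {ω | S u ω = y ∧ S (t+1) ω = w}) := by
                rw [measure_biUnion_finset]
                · intro i _ j _ hij
                  exact (hEd hij).mono inter_subset_left inter_subset_left
                · intro i _
                  exact (hEmeas i).inter (((measS hS u) (measurableSet_singleton y)).inter ((measS hS (t+1)) (measurableSet_singleton w)))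
            _ ≤ _ := measure_mono (iUnion₂_subset fun i _ => inter_subset_right)
  calc _ ≤ P x (⋃ i ∈ Finset.range (N+1), {ω | ω ∈ E i ∧ S t ω = w}) := measure_mono hsub
    _ ≤ ∑ i ∈ Finset.range (N+1), P x {ω | ω ∈ E i ∧ S t ω = w} := measure_biUnion_finset_le _ _
    _ = ∑ i ∈ Finset.range (N+1), P x (E i) * kap P S (t - i * δ) y w := by
        refine Finset.sum_congr rfl fun i hi => ?_
        have hi' := hle i (by simpa [Nat.lt_succ_iff] using hi)
        have := markovB hS x i (tt i) (htt0 i) (httm i) (B i) y (fun a ha => ha.2) t (by rw [httl]; exact hi') w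
        rw [httl] at this
        exact this
    _ = ENNReal.ofReal (Real.exp (4 * d)) * (c * c * ∑ i ∈ Finset.range (N+1), P x (E i) * kap P S (t - i * δ) y w) := by
        rw [← mul_assoc, hcc, one_mul]
    _ ≤ _ := by gcongr

lemma hit_bound (hS : IsCTSRW d P S) (x y w : Fin d → ℤ) (t : ℝ) (ht : 0 < t) :
    P x {ω | (∃ u ∈ Icc 0 t, S u ω = y) ∧ S t ω = w} ≤
      ENNReal.ofReal (Real.exp (4 * d)) * ∫⁻ u in Ioc 0 (t+1), kap P S u x y * kap P S (t + 1 - u) y w := by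
  let D : ℕ → Set Ω := fun n => {ω | (∃ i : ℕ, i ≤ 2^n ∧ S (i * (t / (2^n : ℕ))) ω = y) ∧ S t ω = w}
  have hmono : Monotone D := by
    apply monotone_nat_of_le_succ
    rintro n ω ⟨⟨i, hi, h⟩, hw⟩
    refine ⟨⟨2 * i, by rw [pow_succ]; omega, ?_⟩, hw⟩
    rw [← h]
    congr 1
    push_cast
    rw [pow_succ]
    field_simp
  have hsub : {ω | (∃ u ∈ Icc 0 t, S u ω = y) ∧ S t ω = w} ≤ᵐ[P x] ⋃ n, D n := by
    filter_upwards [hS.rightCont x] with ω hω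
    rintro ⟨⟨u, hu, hy⟩, hw⟩
    apply mem_iUnion.mpr
    rcases hu.2.eq_or_lt with h | h
    · exact ⟨0, ⟨1, by simp, by rw [← hy, h]; simp⟩, hw⟩
    · obtain ⟨ε, hε, hr⟩ := hω u hu.1
      have hm : 0 < min ε (t - u) := lt_min hε (by linarith)
      obtain ⟨n, hn⟩ := exists_nat_gt (t / min ε (t - u))
      have hn2 : (n:ℝ) < 2^n := by exact_mod_cast Nat.lt_two_pow_self
      have hp : (0:ℝ) < 2^n := by positivity
      have hlt : t / 2^n < min ε (t - u) := by
        rw [div_lt_iff₀ hp, mul_comm, ← div_lt_iff₀ hm]; linarith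
      have hq : 0 < t / 2^n := by positivity
      set i := ⌈u / (t / 2^n)⌉₊ with hi
      have h1 : u ≤ i * (t / 2^n) := by
        have := Nat.le_ceil (u / (t / 2^n)); rwa [div_le_iff₀ hq] at this
      have h2 : i * (t / 2^n) < u + t / 2^n := by
        have := Nat.ceil_lt_add_one (a := u / (t / 2^n)) (div_nonneg hu.1 hq.le)
        have h3 : (i:ℝ) * (t / 2^n) < (u / (t / 2^n) + 1) * (t/2^n) := by gcongr
        rw [add_mul, div_mul_cancel₀ _ hq.ne', one_mul] at h3
        exact h3
      refine ⟨n, ⟨i, ?_, ?_⟩, hw⟩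
      · have h3 : (i:ℝ) * (t/2^n) < 2^n * (t/2^n) := by
          rw [mul_div_cancel₀ _ hp.ne']; linarith [min_le_right ε (t-u)]
        have h4 : (i:ℝ) < 2^n := lt_of_mul_lt_mul_right h3 hq.le
        exact_mod_cast h4.le
      · rw [← hy]
        push_cast
        exact hr _ h1 (by linarith [min_le_left ε (t-u)])
  calc _ ≤ P x (⋃ n, D n) := measure_mono_ae hsub
    _ = ⨆ n, P x (D n) := hmono.measure_iUnion
    _ ≤ _ := iSup_le fun n => hit_skel hS x y w t ht (2^n) (by positivity)

/-- Green function up to time `T`. -/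
noncomputable def gr (P : (Fin d → ℤ) → Measure Ω) (S : ℝ → Ω → (Fin d → ℤ)) (T : ℝ) (x y : Fin d → ℤ) : ℝ≥0∞ :=
  ∫⁻ u in Ioc 0 T, kap P S u x y

lemma gr_sum (hS : IsCTSRW d P S) (T : ℝ) (x : Fin d → ℤ) : ∑' y, gr P S T x y = ENNReal.ofReal T := by
  unfold gr
  rw [← lintegral_tsum fun y => (kap_meas hS x y).aemeasurable]
  simp_rw [kap_sum hS]
  simp

lemma gr_mono {T T' : ℝ} (h : T ≤ T') (x y : Fin d → ℤ) : gr P S T x y ≤ gr P S T' x y :=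
  lintegral_mono_set (Ioc_subset_Ioc_right h)

lemma hit_free (hS : IsCTSRW d P S) (x y : Fin d → ℤ) (t : ℝ) (ht : 0 < t) :
    P x {ω | ∃ u ∈ Icc 0 t, S u ω = y} ≤ ENNReal.ofReal (Real.exp (4 * d)) * gr P S (t+1) x y := by
  calc P x {ω | ∃ u ∈ Icc 0 t, S u ω = y} ≤ P x (⋃ w, {ω | (∃ u ∈ Icc 0 t, S u ω = y) ∧ S t ω = w}) := by
        apply measure_mono
        intro ω h
        exact mem_iUnion.mpr ⟨S t ω, h, rfl⟩
    _ ≤ ∑' w, P x {ω | (∃ u ∈ Icc 0 t, S u ω = y) ∧ S t ω = w} := measure_iUnion_le _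
    _ ≤ ∑' w, ENNReal.ofReal (Real.exp (4 * d)) * ∫⁻ u in Ioc 0 (t+1), kap P S u x y * kap P S (t + 1 - u) y w :=
        ENNReal.tsum_le_tsum fun w => hit_bound hS x y w t ht
    _ = _ := by
        rw [ENNReal.tsum_mul_left, ← lintegral_tsum]
        · simp_rw [ENNReal.tsum_mul_left, kap_sum hS, mul_one]; rfl
        · intro w
          exact ((kap_meas hS x y).mul ((kap_meas hS y w).comp (by fun_prop))).aemeasurable

lemma finite_range (hS : IsCTSRW d P S) (x : Fin d → ℤ) : ∀ᵐ ω ∂ P x, ∀ t : ℝ, {y | ∃ u ∈ Icc 0 t, S u ω = y}.Finite := by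
  have h : ∀ n : ℕ, ∀ᵐ ω ∂ P x, {y | ∃ u ∈ Icc (0:ℝ) (n+1), S u ω = y}.Finite := by
    intro n
    have := ae_finite_setOfPred_mem (μ := P x) (s := fun y => {ω | ∃ u ∈ Icc (0:ℝ) (n+1), S u ω = y}) ?_
    · exact this
    · apply ne_top_of_le_ne_top _ (ENNReal.tsum_le_tsum fun y => hit_free hS x y (n+1) (by positivity))
      rw [ENNReal.tsum_mul_left, gr_sum hS]
      exact ENNReal.mul_ne_top ENNReal.ofReal_ne_top ENNReal.ofReal_ne_top
  filter_upwards [ae_all_iff.mpr h] with ω hω t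
  obtain ⟨n, hn⟩ := exists_nat_ge t
  apply (hω n).subset
  rintro y ⟨u, hu, hy⟩
  exact ⟨u, ⟨hu.1, hu.2.trans (by linarith)⟩, hy⟩
end
end RWRS

open MeasureTheory ProbabilityTheory Filter Set
namespace RWRS
open scoped ENNReal
section
variable {d : ℕ} {Ω : Type*} [MeasurableSpace Ω]
    {P : (Fin d → ℤ) → Measure Ω} {S : ℝ → Ω → (Fin d → ℤ)}

lemma kap_symm (hS : IsCTSRW d P S) (hd : 0 < d) {u : ℝ} (hu : 0 ≤ u) (x y : Fin d → ℤ) :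
    kap P S u x y = kap P S u y x := by
  rw [kap_eq hS hu, kap_eq hS hu, heat_symm d hd]

lemma kap_diag (hS : IsCTSRW d P S) (hd : 0 < d) {u : ℝ} (hu : 0 ≤ u) (y : Fin d → ℤ) :
    kap P S u y y = kap P S u 0 0 := by
  rw [kap_eq hS hu, kap_eq hS hu, heat_diag d hd]

lemma flip_int (f : ℝ → ℝ≥0∞) (T : ℝ) : ∫⁻ u in Ioc 0 T, f (T - u) = ∫⁻ u in Ioc 0 T, f u := by
  rw [restrict_Ioc_eq_restrict_Icc, ← lintegral_indicator measurableSet_Icc, ← lintegral_indicator measurableSet_Icc,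
    ← lintegral_sub_left_eq_self (fun u => (Icc 0 T).indicator f u) T]
  congr 1
  ext u
  by_cases h : u ∈ Icc 0 T
  · rw [indicator_of_mem h, indicator_of_mem]
    exact ⟨by linarith [h.2], by linarith [h.1]⟩
  · rw [indicator_of_notMem h, indicator_of_notMem]
    contrapose! h
    exact ⟨by linarith [h.2], by linarith [h.1]⟩

lemma hit_pinned (hS : IsCTSRW d P S) (hd : 0 < d) : ∃ C > (0:ℝ), ∀ t ≥ 1, ∀ H : Set (Fin d → ℤ),
    P 0 {ω | (∃ u ∈ Icc 0 t, S u ω ∈ H) ∧ S t ω = 0} ≤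
      ENNReal.ofReal (C * t ^ (-(d/2) : ℝ)) * ∑' y, H.indicator (gr P S (t+1) 0) y := by
  obtain ⟨C, hC, hheat⟩ := heat_upper d hd
  refine ⟨Real.exp (4 * d) * (C * (1/2) ^ (-(d/2) : ℝ)) * 2, by positivity, fun t ht H => ?_⟩
  have ht0 : 0 < t := by linarith
  set A := ENNReal.ofReal (C * (1/2) ^ (-(d/2) : ℝ) * t ^ (-(d/2) : ℝ)) with hA
  have hk : ∀ u, t / 2 ≤ u → ∀ x y, kap P S u x y ≤ A := by
    intro u hu x y
    have hu0 : 0 < u := by linarith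
    rw [kap_eq hS hu0.le]
    apply ENNReal.ofReal_le_ofReal
    refine (hheat u hu0 x y).trans ?_
    rw [mul_assoc, ← Real.mul_rpow (by norm_num) ht0.le]
    apply mul_le_mul_of_nonneg_left _ hC.le
    apply Real.rpow_le_rpow_of_nonpos (by positivity) (by linarith)
    have : (0:ℝ) ≤ d := by positivity
    linarith
  have h1 : ∀ y, ∫⁻ u in Ioc 0 (t+1), kap P S u 0 y * kap P S (t + 1 - u) y 0 ≤ A * 2 * gr P S (t+1) 0 y := by
    intro y
    calc ∫⁻ u in Ioc 0 (t+1), kap P S u 0 y * kap P S (t + 1 - u) y 0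
        ≤ ∫⁻ u in Ioc 0 (t+1), A * (kap P S u 0 y + kap P S (t + 1 - u) 0 y) := by
          apply setLIntegral_mono' measurableSet_Ioc
          intro u hu
          rw [kap_symm hS hd (by linarith [hu.2] : (0:ℝ) ≤ t + 1 - u) y 0, mul_add]
          rcases le_total (t/2) u with h | h
          · calc _ ≤ A * kap P S (t + 1 - u) 0 y := by gcongr; exact hk u h _ _
              _ ≤ _ := le_add_self
          · calc _ ≤ kap P S u 0 y * A := by gcongr; exact hk _ (by linarith) _ _
              _ = A * kap P S u 0 y := mul_comm _ _
              _ ≤ _ := le_self_add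
      _ = A * (gr P S (t+1) 0 y + ∫⁻ u in Ioc 0 (t+1), kap P S (t + 1 - u) 0 y) := by
          rw [lintegral_const_mul, lintegral_add_left (kap_meas hS 0 y)]
          · rfl
          · exact (kap_meas hS 0 y).add ((kap_meas hS 0 y).comp (by fun_prop))
      _ = _ := by
          rw [flip_int (fun u => kap P S u 0 y)]
          change A * (gr P S (t+1) 0 y + gr P S (t+1) 0 y) = _
          ring
  calc _ ≤ P 0 (⋃ y : H, {ω | (∃ u ∈ Icc 0 t, S u ω = y) ∧ S t ω = 0}) := by
        apply measure_mono
        rintro ω ⟨⟨u, hu, h⟩, h0⟩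
        exact mem_iUnion.mpr ⟨⟨S u ω, h⟩, ⟨u, hu, rfl⟩, h0⟩
    _ ≤ ∑' y : H, P 0 {ω | (∃ u ∈ Icc 0 t, S u ω = y) ∧ S t ω = 0} := measure_iUnion_le _
    _ ≤ ∑' y : H, (ENNReal.ofReal (Real.exp (4 * d)) * (A * 2)) * gr P S (t+1) 0 y := by
        refine ENNReal.tsum_le_tsum fun y => (hit_bound hS 0 y 0 t ht0).trans ?_
        rw [mul_assoc]
        gcongr
        exact h1 y
    _ = _ := by
        rw [ENNReal.tsum_mul_left, tsum_subtype H (fun y => gr P S (t+1) 0 y)]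
        congr 1
        rw [hA, show (2:ℝ≥0∞) = ENNReal.ofReal 2 by simp, ← ENNReal.ofReal_mul (by positivity), ← ENNReal.ofReal_mul (by positivity)]
        congr 1; ring

lemma chain (m : Measure ℝ) [SigmaFinite m] (a k : ℝ → ℝ≥0∞) (ha : Measurable a) (hk : Measurable k)
    (B : ℝ≥0∞) (hB : ∀ s, ∫⁻ r, k (r - s) ∂m ≤ B) (n : ℕ) :
    ∫⁻ v : Fin (n+1) → ℝ, a (v 0) * ∏ i : Fin n, k (v i.succ - v i.castSucc) ∂(Measure.pi fun _ => m)
      ≤ (∫⁻ u, a u ∂m) * B ^ n := by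
  induction n with
  | zero =>
    simp only [Finset.univ_eq_empty, Finset.prod_empty, mul_one, pow_zero]
    have := (measurePreserving_funUnique m (Fin 1)).lintegral_comp ha
    rw [← this]
    rfl
  | succ n ih =>
    have hmp := (measurePreserving_piFinSuccAbove (fun _ : Fin (n+2) => m) (Fin.last (n+1))).symm
    have hmeas : ∀ N : ℕ, Measurable fun v : Fin (N+1) → ℝ => a (v 0) * ∏ i : Fin N, k (v i.succ - v i.castSucc) := by
      intro N
      refine (ha.comp (measurable_pi_apply _)).mul (Finset.measurable_fun_prod _ fun i _ => hk.comp ?_)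
      fun_prop
    rw [← hmp.lintegral_comp (hmeas (n+1))]
    have e : ∀ p : ℝ × (Fin (n+1) → ℝ), (a (((MeasurableEquiv.piFinSuccAbove (fun _ => ℝ) (Fin.last (n+1))).symm p) 0) *
        ∏ i : Fin (n+1), k (((MeasurableEquiv.piFinSuccAbove (fun _ => ℝ) (Fin.last (n+1))).symm p) i.succ -
          ((MeasurableEquiv.piFinSuccAbove (fun _ => ℝ) (Fin.last (n+1))).symm p) i.castSucc))
        = k (p.1 - p.2 (Fin.last n)) * (a (p.2 0) * ∏ i : Fin n, k (p.2 i.succ - p.2 i.castSucc)) := by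
      rintro ⟨r, v⟩
      have h1 : ((MeasurableEquiv.piFinSuccAbove (fun _ => ℝ) (Fin.last (n+1))).symm (r, v)) = Fin.snoc (α := fun _ => ℝ) v r := by
        rw [MeasurableEquiv.piFinSuccAbove_symm_apply]
        simp [Fin.insertNthEquiv]
      rw [h1, Fin.prod_univ_castSucc]
      have e0 : (0 : Fin (n+2)) = (0 : Fin (n+1)).castSucc := rfl
      simp only [e0, Fin.snoc_castSucc, Fin.succ_last, Fin.snoc_last, ← Fin.castSucc_succ]
      ring
    simp_rw [e]
    rw [lintegral_prod_symm]
    · simp only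
      calc _ ≤ ∫⁻ v : Fin (n+1) → ℝ, B * (a (v 0) * ∏ i : Fin n, k (v i.succ - v i.castSucc)) ∂(Measure.pi fun _ => m) := by
            refine lintegral_mono fun v => ?_
            simp only
            have hk' : Measurable fun x : ℝ => k (x - v (Fin.last n)) := hk.comp (by fun_prop)
            rw [lintegral_mul_const _ hk']
            gcongr
            exact hB _
        _ ≤ _ := by
            rw [lintegral_const_mul _ (hmeas n), pow_succ]
            calc _ ≤ B * ((∫⁻ u, a u ∂m) * B ^ n) := by gcongr
              _ = _ := by ring
    · apply Measurable.aemeasurable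
      exact (hk.comp (by fun_prop)).mul ((hmeas n).comp measurable_snd)

noncomputable def loc (S : ℝ → Ω → (Fin d → ℤ)) (t : ℝ) (y : Fin d → ℤ) (ω : Ω) : ℝ≥0∞ :=
  volume.restrict (Ioc 0 t) {u | S u ω = y}

noncomputable def gg (P : (Fin d → ℤ) → Measure Ω) (S : ℝ → Ω → (Fin d → ℤ)) : ℝ≥0∞ :=
  ∫⁻ u in Ici 0, kap P S u 0 0

lemma gg_lt (hS : IsCTSRW d P S) (hd : 3 ≤ d) : gg P S < ∞ := by
  obtain ⟨C, hC, hheat⟩ := heat_upper d (by omega)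
  have : Ici (0:ℝ) = Icc 0 1 ∪ Ioi 1 := by
    rw [Icc_union_Ioi_eq_Ici]; norm_num
  unfold gg
  rw [this]
  refine (lintegral_union_le _ _ _).trans_lt (ENNReal.add_lt_top.mpr ⟨?_, ?_⟩)
  · calc _ ≤ ∫⁻ u in Icc (0:ℝ) 1, 1 := lintegral_mono fun u => kap_le_one hS u 0 0
      _ < ∞ := by simp
  · have hi : IntegrableOn (fun u : ℝ => C * u ^ (-(d/2) : ℝ)) (Ioi 1) := by
      apply Integrable.const_mul
      apply integrableOn_Ioi_rpow_of_lt _ one_pos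
      have : (3:ℝ) ≤ d := by exact_mod_cast hd
      linarith
    calc _ ≤ ∫⁻ u in Ioi (1:ℝ), ENNReal.ofReal (C * u ^ (-(d/2) : ℝ)) := by
          apply setLIntegral_mono' measurableSet_Ioi
          intro u hu
          have hu0 : 0 < u := lt_trans one_pos hu
          rw [kap_eq hS hu0.le]
          exact ENNReal.ofReal_le_ofReal (hheat u hu0 _ _)
      _ < ∞ := by
          have h2 := hi.hasFiniteIntegral
          refine lt_of_le_of_lt (lintegral_mono fun u => ?_) h2
          exact Real.ofReal_le_enorm _

lemma loc_moment (hS : IsCTSRW d P S) (hd : 0 < d) (t : ℝ) (y : Fin d → ℤ) (n : ℕ) :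
    ∫⁻ ω, loc S t y ω ^ (n+1) ∂(P 0) ≤ (n+1).factorial * (gr P S t 0 y * gg P S ^ n) := by
  have := hS.prob 0
  let m : Measure ℝ := volume.restrict (Ioc 0 t)
  let pm : Measure (Fin (n+1) → ℝ) := Measure.pi fun _ => m
  have hset : MeasurableSet {p : Ω × (Fin (n+1) → ℝ) | ∀ i, S (p.2 i) p.1 = y} := by
    have : {p : Ω × (Fin (n+1) → ℝ) | ∀ i, S (p.2 i) p.1 = y} = ⋂ i, {p | S (p.2 i) p.1 = y} := by ext; simp
    rw [this]
    refine MeasurableSet.iInter fun i => ?_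
    have h1 : Measurable fun p : Ω × (Fin (n+1) → ℝ) => (p.2 i, p.1) := by fun_prop
    exact (hS.meas.comp h1) (measurableSet_singleton y)
  have e1 : ∀ ω, loc S t y ω ^ (n+1) = pm {v | ∀ i, S (v i) ω = y} := by
    intro ω
    have : {v : Fin (n+1) → ℝ | ∀ i, S (v i) ω = y} = Set.pi univ (fun _ => {u | S u ω = y}) := by ext; simp
    rw [this, Measure.pi_pi]
    simp [loc, m]
  simp_rw [e1]
  have e2 : ∫⁻ ω, pm {v | ∀ i, S (v i) ω = y} ∂(P 0) = ∫⁻ v, P 0 {ω | ∀ i, S (v i) ω = y} ∂pm := by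
    have h1 := Measure.prod_apply (μ := P 0) (ν := pm) hset
    have h2 := Measure.prod_apply_symm (μ := P 0) (ν := pm) hset
    exact h1.symm.trans h2
  rw [e2]
  let k : ℝ → ℝ≥0∞ := (Ici 0).indicator fun u => kap P S u 0 0
  have hk : Measurable k := (kap_meas hS 0 0).indicator measurableSet_Ici
  let H : (Fin (n+1) → ℝ) → ℝ≥0∞ := fun v => kap P S (v 0) 0 y * ∏ i : Fin n, k (v i.succ - v i.castSucc)
  have hH : Measurable H := by
    refine ((kap_meas hS 0 y).comp (measurable_pi_apply _)).mul (Finset.measurable_fun_prod _ fun i _ => hk.comp ?_)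
    fun_prop
  have hHint : ∫⁻ v, H v ∂pm ≤ gr P S t 0 y * gg P S ^ n := by
    apply chain m (fun u => kap P S u 0 y) k (kap_meas hS 0 y) hk
    intro s
    calc ∫⁻ r, k (r - s) ∂m ≤ ∫⁻ r, k (r - s) := lintegral_mono' Measure.restrict_le_self le_rfl
      _ = ∫⁻ r, k r := lintegral_sub_right_eq_self k s
      _ = gg P S := lintegral_indicator measurableSet_Ici _
  have hpos : ∀ᵐ v ∂pm, ∀ i, v i ∈ Ioc 0 t := by
    rw [ae_all_iff]
    intro i
    exact (Measure.tendsto_eval_ae_ae (μ := fun _ : Fin (n+1) => m) (i := i)).eventually (ae_restrict_mem measurableSet_Ioc)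
  calc ∫⁻ v, P 0 {ω | ∀ i, S (v i) ω = y} ∂pm ≤ ∫⁻ v, ∑ σ : Equiv.Perm (Fin (n+1)), H (v ∘ σ) ∂pm := by
        apply lintegral_mono_ae
        filter_upwards [hpos] with v hv
        let σ := Tuple.sort v
        have hm : Monotone (v ∘ σ) := Tuple.monotone_sort v
        calc P 0 {ω | ∀ i, S (v i) ω = y} = P 0 {ω | ∀ i, S ((v ∘ σ) i) ω = y} := by
              congr 1
              ext ω
              simp only [mem_ofPred_eq, Function.comp]
              exact ⟨fun h i => h _, fun h i => by simpa using h (σ.symm i)⟩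
          _ = H (v ∘ σ) := by
              have hle : ∀ i : Fin n, (v ∘ σ) i.castSucc ≤ (v ∘ σ) i.succ := fun i => hm (Fin.castSucc_lt_succ).le
              rw [fdd' hS 0 n (v ∘ σ) (hv _).1.le hle (fun _ => y)]
              simp only [H]
              congr 1
              refine Finset.prod_congr rfl fun i _ => ?_
              have h0 : 0 ≤ (v ∘ σ) i.succ - (v ∘ σ) i.castSucc := sub_nonneg.mpr (hle i)
              simp only [k]
              have hmem : (v ∘ σ) i.succ - (v ∘ σ) i.castSucc ∈ Ici (0:ℝ) := h0
              rw [indicator_of_mem hmem, kap_diag hS hd h0]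
          _ ≤ _ := Finset.single_le_sum (f := fun σ : Equiv.Perm (Fin (n+1)) => H (v ∘ σ)) (fun _ _ => zero_le) (Finset.mem_univ σ)
    _ = ∑ σ : Equiv.Perm (Fin (n+1)), ∫⁻ v, H (v ∘ σ) ∂pm := by
        rw [lintegral_finsetSum]
        intro σ _
        exact hH.comp (measurable_pi_lambda _ fun i => measurable_pi_apply _)
    _ = ∑ σ : Equiv.Perm (Fin (n+1)), ∫⁻ v, H v ∂pm := by
        refine Finset.sum_congr rfl fun σ _ => ?_
        have hp := measurePreserving_piCongrLeft (fun _ : Fin (n+1) => m) σ.symm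
        have h2 := hp.lintegral_comp hH
        rw [← h2]
        congr 1
        ext v
        congr 1
        ext i
        have := MeasurableEquiv.piCongrLeft_apply_apply (β := fun _ => ℝ) σ.symm v (σ i)
        simpa using this.symm
    _ ≤ _ := by
        rw [Finset.sum_const, Finset.card_univ, Fintype.card_perm, Fintype.card_fin, nsmul_eq_mul]
        gcongr

lemma loc_meas (hS : IsCTSRW d P S) (t : ℝ) (y : Fin d → ℤ) : Measurable (loc S t y) := by
  have h1 : MeasurableSet {p : Ω × ℝ | S p.2 p.1 = y} := (hS.meas.comp measurable_swap) (measurableSet_singleton y)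
  exact measurable_measure_prodMk_left h1

lemma loc_tail (hS : IsCTSRW d P S) (hd : 0 < d) (t : ℝ) (L : ℝ) (hL : 0 < L) (n : ℕ) :
    P 0 {ω | ∃ y, ENNReal.ofReal L < loc S t y ω} ≤
      (n+1).factorial * gg P S ^ n * (ENNReal.ofReal t / (ENNReal.ofReal L) ^ (n+1)) := by
  have hL0 : ENNReal.ofReal L ≠ 0 := by simp [hL]
  calc _ ≤ P 0 (⋃ y, {ω | ENNReal.ofReal L < loc S t y ω}) := by
        apply measure_mono; intro ω h; exact mem_iUnion.mpr h
    _ ≤ ∑' y, P 0 {ω | ENNReal.ofReal L < loc S t y ω} := measure_iUnion_le _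
    _ ≤ ∑' y, ((n+1).factorial * (gr P S t 0 y * gg P S ^ n)) / (ENNReal.ofReal L) ^ (n+1) := by
        refine ENNReal.tsum_le_tsum fun y => ?_
        calc P 0 {ω | ENNReal.ofReal L < loc S t y ω} ≤ P 0 {ω | (ENNReal.ofReal L)^(n+1) ≤ loc S t y ω ^ (n+1)} := by
              apply measure_mono; intro ω (h : ENNReal.ofReal L < loc S t y ω)
              exact pow_le_pow_left' h.le _
          _ ≤ (∫⁻ ω, loc S t y ω ^ (n+1) ∂(P 0)) / (ENNReal.ofReal L) ^ (n+1) := by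
              apply meas_ge_le_lintegral_div
              · exact ((loc_meas hS t y).pow_const _).aemeasurable
              · exact pow_ne_zero _ hL0
              · exact ENNReal.pow_ne_top ENNReal.ofReal_ne_top
          _ ≤ _ := by gcongr; exact loc_moment hS hd t y n
    _ = _ := by
        simp_rw [div_eq_mul_inv]
        rw [ENNReal.tsum_mul_right, ENNReal.tsum_mul_left, ENNReal.tsum_mul_right, gr_sum hS]
        ring
end
end RWRS

open MeasureTheory ProbabilityTheory Filter Set
namespace RWRS
open scoped ENNReal
section
variable {d : ℕ} {Ω Ωz : Type*} [MeasurableSpace Ω] [MeasurableSpace Ωz]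
    {P : (Fin d → ℤ) → Measure Ω} {S : ℝ → Ω → (Fin d → ℤ)}
    {α : ℝ} {μ : Measure Ωz} {z : (Fin d → ℤ) → Ωz → ℝ}

lemma exp_le_aux {x : ℝ} (h0 : 0 ≤ x) (h1 : x ≤ 1) : Real.exp x ≤ 1 + 2 * x := by
  have h := Real.abs_exp_sub_one_sub_id_le (x := x) (by rw [abs_of_nonneg h0]; exact h1)
  have h2 := (abs_le.mp h).2
  nlinarith

lemma exp_neg_le_aux {x : ℝ} (h0 : 0 ≤ x) (h1 : x ≤ 1) : Real.exp (-x) ≤ 1 - x / 2 := by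
  have h := Real.add_one_le_exp x
  have h3 : Real.exp (-x) * Real.exp x = 1 := by rw [← Real.exp_add]; simp
  have h4 : 0 < Real.exp (-x) := Real.exp_pos _
  by_contra hc
  push Not at hc
  nlinarith

lemma int_f (hz : IsScenery d α μ z) (f : ℝ → ℝ) (hf : Measurable f) (h0 : ∀ r, 0 ≤ f r) (h1 : ∀ r, f r ≤ 1)
    (y : Fin d → ℤ) : Integrable (fun ζ => f (z y ζ)) μ := by
  have := hz.prob
  refine Integrable.of_bound (hf.comp (hz.meas y)).aestronglyMeasurable 1 (ae_of_all _ fun ζ => ?_)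
  rw [Real.norm_eq_abs, abs_of_nonneg (h0 _)]; exact h1 _

lemma int_f_eq (hz : IsScenery d α μ z) (f : ℝ → ℝ) (hf : Measurable f)
    (y : Fin d → ℤ) : ∫ ζ, f (z y ζ) ∂μ = ∫ ζ, f (z 0 ζ) ∂μ :=
  ((hz.ident y).comp hf).integral_eq

lemma chern_up (hz : IsScenery d α μ z) (f : ℝ → ℝ) (hf : Measurable f) (h0 : ∀ r, 0 ≤ f r) (h1 : ∀ r, f r ≤ 1)
    (F : Finset (Fin d → ℤ)) (a : (Fin d → ℤ) → ℝ) (ha0 : ∀ y, 0 ≤ a y) (ha1 : ∀ y, a y ≤ 1) (l : ℝ) :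
    μ.real {ζ | l ≤ ∑ y ∈ F, a y * f (z y ζ)} ≤ Real.exp (-l + 2 * (∑ y ∈ F, a y) * ∫ ζ, f (z 0 ζ) ∂μ) := by
  have := hz.prob
  let X : (Fin d → ℤ) → Ωz → ℝ := fun y ζ => a y * f (z y ζ)
  have hX : ∀ y, Measurable (X y) := fun y => (hf.comp (hz.meas y)).const_mul _
  have hind : iIndepFun X μ := hz.indep.comp (fun y r => a y * f r) (fun y => hf.const_mul _)
  have hX0 : ∀ y ζ, 0 ≤ X y ζ := fun y ζ => mul_nonneg (ha0 y) (h0 _)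
  have hX1 : ∀ y ζ, X y ζ ≤ 1 := fun y ζ => mul_le_one₀ (ha1 y) (h0 _) (h1 _)
  have hm := hind.mgf_sum (t := 1) hX F
  have hsum : (fun ζ => ∑ y ∈ F, a y * f (z y ζ)) = ∑ y ∈ F, X y := by ext ζ; simp [X]
  have hint : Integrable (fun ζ => Real.exp (1 * (∑ y ∈ F, X y) ζ)) μ := by
    refine Integrable.of_bound ?_ (Real.exp (F.card)) (ae_of_all _ fun ζ => ?_)
    · simp only [Finset.sum_apply]
      exact ((Finset.measurable_sum F (fun y _ => hX y)).const_mul 1).exp.aestronglyMeasurable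
    · rw [Real.norm_eq_abs, Real.abs_exp, one_mul, Finset.sum_apply]
      apply Real.exp_le_exp.mpr
      calc ∑ y ∈ F, X y ζ ≤ ∑ y ∈ F, (1:ℝ) := Finset.sum_le_sum fun y _ => hX1 y ζ
        _ = _ := by simp
  have hc := measure_ge_le_exp_mul_mgf (μ := μ) (X := ∑ y ∈ F, X y) (t := 1) l zero_le_one hint
  have hmg : ∀ y, mgf (X y) μ 1 ≤ Real.exp (2 * a y * ∫ ζ, f (z 0 ζ) ∂μ) := by
    intro y
    unfold mgf
    calc ∫ ζ, Real.exp (1 * X y ζ) ∂μ ≤ ∫ ζ, (1 + 2 * a y * f (z y ζ)) ∂μ := by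
          apply integral_mono_of_nonneg (ae_of_all _ fun ζ => (Real.exp_pos _).le)
          · exact (integrable_const _).add ((int_f hz f hf h0 h1 y).const_mul _)
          · refine ae_of_all _ fun ζ => ?_
            have := exp_le_aux (hX0 y ζ) (hX1 y ζ)
            simp only [one_mul]
            calc _ ≤ _ := this
              _ = _ := by simp only [X]; ring
      _ = 1 + 2 * a y * ∫ ζ, f (z 0 ζ) ∂μ := by
          rw [integral_add (integrable_const _) ((int_f hz f hf h0 h1 y).const_mul _), integral_const_mul, int_f_eq hz f hf]
          simp
      _ ≤ _ := by
          have := Real.add_one_le_exp (2 * a y * ∫ ζ, f (z 0 ζ) ∂μ)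
          linarith
  calc μ.real {ζ | l ≤ ∑ y ∈ F, a y * f (z y ζ)} = μ.real {ζ | l ≤ (∑ y ∈ F, X y) ζ} := by rw [← hsum]
    _ ≤ _ := hc
    _ ≤ Real.exp (-l) * ∏ y ∈ F, Real.exp (2 * a y * ∫ ζ, f (z 0 ζ) ∂μ) := by
        rw [hm]
        simp only [neg_mul, one_mul]
        gcongr with y hy
        · intro y _; exact mgf_nonneg
        · exact hmg y
    _ = _ := by
        rw [← Real.exp_sum, ← Real.exp_add, ← Finset.sum_mul, ← Finset.mul_sum]

lemma chern_low (hz : IsScenery d α μ z) (f : ℝ → ℝ) (hf : Measurable f) (h0 : ∀ r, 0 ≤ f r) (h1 : ∀ r, f r ≤ 1)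
    (F : Finset (Fin d → ℤ)) :
    μ.real {ζ | ∑ y ∈ F, f (z y ζ) ≤ F.card * (∫ ζ, f (z 0 ζ) ∂μ) / 4} ≤ Real.exp (- (F.card * (∫ ζ, f (z 0 ζ) ∂μ) / 4)) := by
  have := hz.prob
  let X : (Fin d → ℤ) → Ωz → ℝ := fun y ζ => f (z y ζ)
  have hX : ∀ y, Measurable (X y) := fun y => (hf.comp (hz.meas y))
  have hind : iIndepFun X μ := hz.indep.comp (fun y r => f r) (fun y => hf)
  have hX0 : ∀ y ζ, 0 ≤ X y ζ := fun y ζ => h0 _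
  have hX1 : ∀ y ζ, X y ζ ≤ 1 := fun y ζ => h1 _
  have hm := hind.mgf_sum (t := -1) hX F
  have hsum : (fun ζ => ∑ y ∈ F, f (z y ζ)) = ∑ y ∈ F, X y := by ext ζ; simp [X]
  have hint : Integrable (fun ζ => Real.exp (-1 * (∑ y ∈ F, X y) ζ)) μ := by
    refine Integrable.of_bound ?_ 1 (ae_of_all _ fun ζ => ?_)
    · simp only [Finset.sum_apply]
      exact ((Finset.measurable_sum F (fun y _ => hX y)).const_mul (-1)).exp.aestronglyMeasurable
    · rw [Real.norm_eq_abs, Real.abs_exp, Finset.sum_apply]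
      apply Real.exp_le_one_iff.mpr
      have : 0 ≤ ∑ y ∈ F, X y ζ := Finset.sum_nonneg fun y _ => hX0 y ζ
      linarith
  set m := ∫ ζ, f (z 0 ζ) ∂μ with hmdef
  have hc := measure_le_le_exp_mul_mgf (μ := μ) (X := ∑ y ∈ F, X y) (t := -1) (F.card * m / 4) (by norm_num) hint
  have hmg : ∀ y, mgf (X y) μ (-1) ≤ Real.exp (- (m / 2)) := by
    intro y
    unfold mgf
    calc ∫ ζ, Real.exp (-1 * X y ζ) ∂μ ≤ ∫ ζ, (1 - (1/2) * f (z y ζ)) ∂μ := by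
          apply integral_mono_of_nonneg (ae_of_all _ fun ζ => (Real.exp_pos _).le)
          · exact (integrable_const _).sub ((int_f hz f hf h0 h1 y).const_mul _)
          · refine ae_of_all _ fun ζ => ?_
            have := exp_neg_le_aux (hX0 y ζ) (hX1 y ζ)
            simp only [neg_mul, one_mul]
            calc _ ≤ _ := this
              _ = _ := by simp only [X]; ring
      _ = 1 - (1/2) * m := by
          rw [integral_sub (integrable_const _) ((int_f hz f hf h0 h1 y).const_mul _), integral_const_mul, int_f_eq hz f hf]
          simp [m]
      _ ≤ _ := by
          have := Real.add_one_le_exp (- (m/2))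
          linarith
  calc μ.real {ζ | ∑ y ∈ F, f (z y ζ) ≤ F.card * m / 4} = μ.real {ζ | (∑ y ∈ F, X y) ζ ≤ F.card * m / 4} := by rw [← hsum]
    _ ≤ _ := hc
    _ ≤ Real.exp (F.card * m / 4) * ∏ y ∈ F, Real.exp (- (m/2)) := by
        rw [hm]
        simp only [neg_mul, one_mul, neg_neg]
        gcongr with y hy
        · intro y _; exact mgf_nonneg
        · exact hmg y
    _ = _ := by
        rw [← Real.exp_sum, ← Real.exp_add, Finset.sum_const, nsmul_eq_mul]
        congr 1; ring

lemma measP (hS : IsCTSRW d P S) (ω : Ω) : Measurable fun u => S u ω :=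
  hS.meas.comp (by fun_prop : Measurable fun u : ℝ => (u, ω))

lemma occ_formula (hS : IsCTSRW d P S) (t : ℝ) (ω : Ω) (g : (Fin d → ℤ) → ℝ≥0∞) :
    ∫⁻ u in Ioc 0 t, g (S u ω) = ∑' y, g y * loc S t y ω := by
  have hm : Measurable fun u => S u ω := measP hS ω
  have h1 : ∫⁻ u in Ioc 0 t, g (S u ω) = ∫⁻ y, g y ∂((volume.restrict (Ioc 0 t)).map fun u => S u ω) :=
    (lintegral_map (measurable_of_countable g) hm).symm
  rw [h1, lintegral_countable']
  refine tsum_congr fun y => ?_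
  rw [Measure.map_apply hm (measurableSet_singleton y)]
  rfl

lemma loc_sum (hS : IsCTSRW d P S) (t : ℝ) (ω : Ω) : ∑' y, loc S t y ω = ENNReal.ofReal t := by
  have := occ_formula hS t ω (fun _ => 1)
  simpa using this.symm

lemma meas_zS (hS : IsCTSRW d P S) (hz : IsScenery d α μ z) :
    Measurable fun p : (Ωz × Ω) × ℝ => z (S p.2 p.1.2) p.1.1 := by
  have h1 : Measurable fun p : (Fin d → ℤ) × Ωz => z p.1 p.2 := measurable_from_prod_countable_right fun y => hz.meas y
  have h2 : Measurable fun p : (Ωz × Ω) × ℝ => (S p.2 p.1.2, p.1.1) :=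
    Measurable.prodMk (hS.meas.comp (by fun_prop : Measurable fun p : (Ωz × Ω) × ℝ => (p.2, p.1.2))) (by fun_prop)
  exact h1.comp h2

lemma meas_occ (hS : IsCTSRW d P S) (hz : IsScenery d α μ z) (g : ℝ → ℝ≥0∞) (hg : Measurable g) (t : ℝ) :
    Measurable fun p : Ωz × Ω => ∫⁻ u in Ioc 0 t, g (z (S u p.2) p.1) :=
  (hg.comp (meas_zS hS hz)).lintegral_prod_right'

/-- Annealed bound. -/
lemma annealed (hS : IsCTSRW d P S) (hz : IsScenery d α μ z) (hd : 3 ≤ d) (η K : ℝ) (hη : 0 < η) (N : ℕ) :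
    ∃ C : ℝ, 0 < C ∧ ∀ t : ℝ, 1 ≤ t → ∀ f : ℝ → ℝ, Measurable f → (∀ r, 0 ≤ f r) → (∀ r, f r ≤ 1) →
      t * ∫ ζ, f (z 0 ζ) ∂μ ≤ K →
      ∫⁻ ζ, P 0 {ω | ENNReal.ofReal (t ^ (2 * η)) ≤ ∫⁻ u in Ioc 0 t, ENNReal.ofReal (f (z (S u ω) ζ))} ∂μ ≤
        ENNReal.ofReal (C * t ^ (-(N:ℝ))) := by
  have := hz.prob
  have := hS.prob 0
  obtain ⟨n, hn⟩ := exists_nat_ge ((N + 1) / η)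
  have hg := gg_lt hS hd
  set G : ℝ := (gg P S).toReal with hG
  -- exp (-x) ≤ m! / x^m
  obtain ⟨mm, hmm⟩ := exists_nat_ge (N / η)
  refine ⟨(n+1).factorial * G ^ n + Real.exp (2 * K) * mm.factorial, by positivity, ?_⟩
  intro t ht f hf h0 h1 hK
  have ht0 : 0 < t := by linarith
  set L : ℝ := t ^ η with hL
  have hL1 : 1 ≤ L := Real.one_le_rpow ht hη.le
  have hL0 : 0 < L := by linarith
  have hLL : t ^ (2 * η) = L * L := by rw [two_mul, Real.rpow_add ht0]
  let g : ℝ → ℝ≥0∞ := fun r => ENNReal.ofReal (f r)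
  have hgm : Measurable g := hf.ennreal_ofReal
  have hset : MeasurableSet {p : Ωz × Ω | ENNReal.ofReal (t ^ (2 * η)) ≤ ∫⁻ u in Ioc 0 t, g (z (S u p.2) p.1)} :=
    measurableSet_le measurable_const (meas_occ hS hz g hgm t)
  have e1 := Measure.prod_apply (μ := μ) (ν := P 0) hset
  have e2 := Measure.prod_apply_symm (μ := μ) (ν := P 0) hset
  have e3 : ∫⁻ ζ, P 0 {ω | ENNReal.ofReal (t ^ (2 * η)) ≤ ∫⁻ u in Ioc 0 t, ENNReal.ofReal (f (z (S u ω) ζ))} ∂μ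
     = ∫⁻ ω, μ {ζ | ENNReal.ofReal (t ^ (2 * η)) ≤ ∫⁻ u in Ioc 0 t, ENNReal.ofReal (f (z (S u ω) ζ))} ∂(P 0) := e1.symm.trans e2
  rw [e3]
  set B : Set Ω := {ω | ∃ y, ENNReal.ofReal L < loc S t y ω} with hB
  have hBm : MeasurableSet B := by
    have : B = ⋃ y, {ω | ENNReal.ofReal L < loc S t y ω} := by ext; simp [hB]
    rw [this]
    exact MeasurableSet.iUnion fun y => measurableSet_lt measurable_const (loc_meas hS t y)
  have hgood : ∀ᵐ ω ∂(P 0), μ {ζ | ENNReal.ofReal (t ^ (2 * η)) ≤ ∫⁻ u in Ioc 0 t, ENNReal.ofReal (f (z (S u ω) ζ))}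
      ≤ B.indicator 1 ω + ENNReal.ofReal (Real.exp (2 * K) * Real.exp (-L)) := by
    filter_upwards [finite_range hS 0] with ω hω
    by_cases hb : ω ∈ B
    · rw [indicator_of_mem hb]
      exact prob_le_one.trans (le_add_right le_rfl)
    · refine le_add_left ?_
      have hlocL : ∀ y, loc S t y ω ≤ ENNReal.ofReal L := by
        intro y; by_contra hc; exact hb ⟨y, not_le.mp hc⟩
      have hlt : ∀ y, loc S t y ω ≠ ∞ := fun y => ne_top_of_le_ne_top ENNReal.ofReal_ne_top (hlocL y)
      let F := (hω t).toFinset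
      have hF : ∀ y ∉ F, loc S t y ω = 0 := by
        intro y hy
        rw [loc, Measure.restrict_apply (show MeasurableSet {u | S u ω = y} from measP hS ω (measurableSet_singleton y))]
        convert measure_empty (μ := (volume : Measure ℝ))
        ext u
        simp only [mem_inter_iff, mem_ofPred_eq, mem_empty_iff_false, iff_false, not_and]
        intro hu hu2
        apply hy
        simp only [F, Set.Finite.mem_toFinset]
        exact ⟨u, ⟨hu2.1.le, hu2.2⟩, hu⟩
      let a : (Fin d → ℤ) → ℝ := fun y => (loc S t y ω).toReal / L
      have ha0 : ∀ y, 0 ≤ a y := fun y => by positivity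
      have ha1 : ∀ y, a y ≤ 1 := by
        intro y
        rw [div_le_one hL0]
        exact ENNReal.toReal_le_of_le_ofReal hL0.le (hlocL y)
      have hasum : ∑ y ∈ F, a y ≤ t := by
        have h3 : ∑ y ∈ F, loc S t y ω = ENNReal.ofReal t := by
          rw [← loc_sum hS t ω, tsum_eq_sum (s := F)]
          exact fun y hy => hF y hy
        have h4 : ∑ y ∈ F, (loc S t y ω).toReal = t := by
          rw [← ENNReal.toReal_sum (fun y _ => hlt y), h3, ENNReal.toReal_ofReal ht0.le]
        rw [← Finset.sum_div, h4]
        exact div_le_self ht0.le hL1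
      have hsub : {ζ | ENNReal.ofReal (t ^ (2 * η)) ≤ ∫⁻ u in Ioc 0 t, ENNReal.ofReal (f (z (S u ω) ζ))}
          ⊆ {ζ | L ≤ ∑ y ∈ F, a y * f (z y ζ)} := by
        intro ζ hζ
        simp only [mem_ofPred_eq] at hζ ⊢
        rw [occ_formula hS t ω (fun y => ENNReal.ofReal (f (z y ζ))), tsum_eq_sum (s := F) (fun y hy => by rw [hF y hy, mul_zero])] at hζ
        have h5 : ∑ y ∈ F, ENNReal.ofReal (f (z y ζ)) * loc S t y ω = ENNReal.ofReal (∑ y ∈ F, f (z y ζ) * (loc S t y ω).toReal) := by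
          rw [ENNReal.ofReal_sum_of_nonneg (fun y _ => mul_nonneg (h0 _) ENNReal.toReal_nonneg)]
          refine Finset.sum_congr rfl fun y _ => ?_
          rw [ENNReal.ofReal_mul (h0 _), ENNReal.ofReal_toReal (hlt y)]
        rw [h5, ENNReal.ofReal_le_ofReal_iff (Finset.sum_nonneg fun y _ => mul_nonneg (h0 _) ENNReal.toReal_nonneg), hLL] at hζ
        have h6 : ∑ y ∈ F, a y * f (z y ζ) = (∑ y ∈ F, f (z y ζ) * (loc S t y ω).toReal) / L := by
          rw [Finset.sum_div]; refine Finset.sum_congr rfl fun y _ => ?_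
          simp only [a]; ring
        rw [h6, le_div_iff₀ hL0]; exact hζ
      have hm0 : 0 ≤ ∫ ζ, f (z 0 ζ) ∂μ := integral_nonneg fun _ => h0 _
      have hch := chern_up hz f hf h0 h1 F a ha0 ha1 L
      calc _ ≤ μ {ζ | L ≤ ∑ y ∈ F, a y * f (z y ζ)} := measure_mono hsub
        _ = ENNReal.ofReal (μ.real {ζ | L ≤ ∑ y ∈ F, a y * f (z y ζ)}) := by
            rw [Measure.real, ENNReal.ofReal_toReal (measure_ne_top _ _)]
        _ ≤ _ := by
            apply ENNReal.ofReal_le_ofReal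
            refine hch.trans ?_
            rw [← Real.exp_add]
            apply Real.exp_le_exp.mpr
            have : (∑ y ∈ F, a y) * ∫ ζ, f (z 0 ζ) ∂μ ≤ t * ∫ ζ, f (z 0 ζ) ∂μ := by gcongr
            linarith
  calc _ ≤ ∫⁻ ω, (B.indicator 1 ω + ENNReal.ofReal (Real.exp (2 * K) * Real.exp (-L))) ∂(P 0) := lintegral_mono_ae hgood
    _ = P 0 B + ENNReal.ofReal (Real.exp (2 * K) * Real.exp (-L)) := by
        rw [lintegral_add_right _ measurable_const, lintegral_indicator_one hBm]; simp
    _ ≤ ENNReal.ofReal ((n+1).factorial * G ^ n * t ^ (-(N:ℝ))) + ENNReal.ofReal (Real.exp (2 * K) * mm.factorial * t ^ (-(N:ℝ))) := by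
        refine add_le_add ?_ (ENNReal.ofReal_le_ofReal ?_)
        · refine (loc_tail hS (by omega) t L hL0 n).trans ?_
          have e5 : gg P S = ENNReal.ofReal G := (ENNReal.ofReal_toReal hg.ne).symm
          have hG0 : 0 ≤ G := ENNReal.toReal_nonneg
          rw [e5, ← ENNReal.ofReal_pow hG0, ← ENNReal.ofReal_pow hL0.le, ← ENNReal.ofReal_div_of_pos (by positivity),
            ← ENNReal.ofReal_natCast, ← ENNReal.ofReal_mul (by positivity), ← ENNReal.ofReal_mul (by positivity)]
          apply ENNReal.ofReal_le_ofReal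
          gcongr
          rw [hL, ← Real.rpow_natCast, ← Real.rpow_mul ht0.le, div_eq_mul_inv, ← Real.rpow_neg ht0.le]
          nth_rewrite 1 [← Real.rpow_one t]
          rw [← Real.rpow_add ht0]
          apply Real.rpow_le_rpow_of_exponent_le ht
          rw [div_le_iff₀ hη] at hn
          push_cast
          nlinarith
        · rw [mul_assoc]
          refine mul_le_mul_of_nonneg_left ?_ (Real.exp_pos _).le
          have h7 := Real.pow_div_factorial_le_exp L hL0.le mm
          rw [Real.exp_neg]
          have h8 : L ^ mm / mm.factorial > 0 := by positivity
          calc (Real.exp L)⁻¹ ≤ (L ^ mm / mm.factorial)⁻¹ := by gcongr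
            _ = mm.factorial * (L ^ mm)⁻¹ := by rw [inv_div]; rfl
            _ ≤ _ := by
              gcongr
              rw [hL, ← Real.rpow_natCast, ← Real.rpow_mul ht0.le, ← Real.rpow_neg ht0.le]
              apply Real.rpow_le_rpow_of_exponent_le ht
              rw [div_le_iff₀ hη] at hmm
              linarith
    _ = _ := by
        rw [← ENNReal.ofReal_add (by positivity) (by positivity), add_mul]

end
end RWRS

open MeasureTheory ProbabilityTheory Filter Set
namespace RWRS
open scoped ENNReal
section
variable {d : ℕ} {Ω Ωz : Type*} [MeasurableSpace Ω] [MeasurableSpace Ωz]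
    {P : (Fin d → ℤ) → Measure Ω} {S : ℝ → Ω → (Fin d → ℤ)}
    {α : ℝ} {μ : Measure Ωz} {z : (Fin d → ℤ) → Ωz → ℝ}

lemma tail_up (hz : IsScenery d α μ z) {a : ℝ} (ha : a < α) :
    ∀ᶠ r : ℝ in atTop, (μ {ω | r < z 0 ω}).toReal ≤ r ^ (-a) := by
  filter_upwards [hz.tail.eventually (gt_mem_nhds (show -α < -a by linarith)), eventually_gt_atTop 1] with r hr h1
  have hl : 0 < Real.log r := Real.log_pos h1
  rw [div_lt_iff₀ hl] at hr
  rcases eq_or_lt_of_le (ENNReal.toReal_nonneg : 0 ≤ (μ {ω | r < z 0 ω}).toReal) with h | h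
  · rw [← h]; positivity
  · rw [← Real.exp_log h, Real.rpow_def_of_pos (by linarith)]
    apply Real.exp_le_exp.mpr
    linarith

lemma tail_low (hz : IsScenery d α μ z) (h0 : 0 < α) {a : ℝ} (ha : α < a) :
    ∀ᶠ r : ℝ in atTop, r ^ (-a) ≤ (μ {ω | r < z 0 ω}).toReal := by
  filter_upwards [hz.tail.eventually (lt_mem_nhds (show -a < -α by linarith)),
    hz.tail.eventually (gt_mem_nhds (show -α < 0 by linarith)), eventually_gt_atTop 1] with r hr hr2 h1
  have hl : 0 < Real.log r := Real.log_pos h1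
  rw [lt_div_iff₀ hl] at hr
  rcases eq_or_lt_of_le (ENNReal.toReal_nonneg : 0 ≤ (μ {ω | r < z 0 ω}).toReal) with h | h
  · rw [← h] at hr2; simp at hr2
  · rw [← Real.exp_log h, Real.rpow_def_of_pos (by linarith)]
    apply Real.exp_le_exp.mpr
    linarith

lemma moment (hz : IsScenery d α μ z) {b : ℝ} (hb : 0 < b) (hb2 : b < α) :
    Integrable (fun ζ => z 0 ζ ^ b) μ := by
  have := hz.prob
  refine ⟨((hz.meas 0).pow_const b).aestronglyMeasurable, ?_⟩
  have e : ∫⁻ ζ, ‖z 0 ζ ^ b‖ₑ ∂μ = ∫⁻ ζ, ENNReal.ofReal (z 0 ζ ^ b) ∂μ := by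
    refine lintegral_congr fun ζ => ?_
    rw [Real.enorm_of_nonneg (Real.rpow_nonneg (hz.nonneg 0 ζ) _)]
  rw [HasFiniteIntegral, e, lintegral_rpow_eq_lintegral_meas_lt_mul μ (ae_of_all _ (hz.nonneg 0)) (hz.meas 0).aemeasurable hb]
  refine ENNReal.mul_lt_top ENNReal.ofReal_lt_top ?_
  obtain ⟨a, ha1, ha2⟩ := exists_between hb2
  obtain ⟨R, hR⟩ := eventually_atTop.mp (tail_up hz ha2)
  set R' := max R 1 with hR'
  have hR0 : 0 < R' := lt_of_lt_of_le one_pos (le_max_right _ _)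
  rw [← Ioc_union_Ioi_eq_Ioi hR0.le]
  refine (lintegral_union_le _ _ _).trans_lt (ENNReal.add_lt_top.mpr ⟨?_, ?_⟩)
  · have hi : IntegrableOn (fun u : ℝ => u ^ (b-1)) (Ioc 0 R') := by
      have := (intervalIntegral.intervalIntegrable_rpow' (a := 0) (b := R') (r := b-1) (by linarith))
      rwa [intervalIntegrable_iff_integrableOn_Ioc_of_le hR0.le] at this
    refine lt_of_le_of_lt (lintegral_mono fun u => ?_) hi.hasFiniteIntegral
    calc _ ≤ 1 * ENNReal.ofReal (u ^ (b-1)) := by gcongr; exact prob_le_one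
      _ ≤ _ := by rw [one_mul]; exact Real.ofReal_le_enorm _
  · have hi : IntegrableOn (fun u : ℝ => u ^ (-a + (b-1))) (Ioi R') :=
      integrableOn_Ioi_rpow_of_lt (by linarith) hR0
    refine lt_of_le_of_lt (setLIntegral_mono' measurableSet_Ioi fun u hu => ?_) hi.hasFiniteIntegral
    have hu0 : 0 < u := hR0.trans hu
    have h2 := hR u ((le_max_left _ _).trans (le_of_lt hu))
    beta_reduce
    rw [Real.rpow_add hu0]
    refine le_trans ?_ (Real.ofReal_le_enorm _)
    rw [ENNReal.ofReal_mul (by positivity)]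
    gcongr
    rw [← ENNReal.ofReal_toReal (measure_ne_top μ {ω | u < z 0 ω})]
    exact ENNReal.ofReal_le_ofReal h2

lemma bc (X : ℕ → Ωz → ℝ≥0∞) (hX : ∀ k, Measurable (X k)) (a b : ℕ → ℝ) (ha0 : ∀ k, 0 ≤ a k) (ha : Summable a)
    (hb : ∀ k, 0 < b k) (h : ∀ᶠ k in atTop, ∫⁻ ζ, X k ζ ∂μ ≤ ENNReal.ofReal (a k * b k)) :
    ∀ᵐ ζ ∂μ, ∀ᶠ k in atTop, X k ζ ≤ ENNReal.ofReal (b k) := by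
  obtain ⟨k0, hk0⟩ := eventually_atTop.mp h
  have h1 : ∫⁻ ζ, ∑' k, X (k + k0) ζ / ENNReal.ofReal (b (k + k0)) ∂μ ≠ ∞ := by
    rw [lintegral_tsum fun k => ((hX _).div_const _).aemeasurable]
    refine ne_top_of_le_ne_top (Summable.tsum_ofReal_ne_top ((summable_nat_add_iff k0).mpr ha)) (ENNReal.tsum_le_tsum fun k => ?_)
    simp_rw [div_eq_mul_inv]
    rw [lintegral_mul_const _ (hX _), ← div_eq_mul_inv]
    apply ENNReal.div_le_of_le_mul
    rw [← ENNReal.ofReal_mul (ha0 _)]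
    exact hk0 _ (by omega)
  have h2 := ae_lt_top (Measurable.ennreal_tsum fun k => ((hX (k+k0)).div_const (ENNReal.ofReal (b (k + k0))))) h1
  filter_upwards [h2] with ζ hζ
  have h3 := ENNReal.tendsto_atTop_zero_of_tsum_ne_top hζ.ne
  have h4 := h3.eventually (ge_mem_nhds (zero_lt_one : (0:ℝ≥0∞) < 1))
  obtain ⟨k1, hk1⟩ := eventually_atTop.mp h4
  refine eventually_atTop.mpr ⟨k1 + k0, fun k hk => ?_⟩
  have h5 := hk1 (k - k0) (by omega)
  rw [Nat.sub_add_cancel (by omega)] at h5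
  have hb0 : ENNReal.ofReal (b k) ≠ 0 := by simp [hb k]
  have := (ENNReal.div_le_iff hb0 ENNReal.ofReal_ne_top).mp h5
  simpa using this

lemma T_pos (k : ℕ) : (0:ℝ) < 2 ^ k := by positivity
lemma T_one (k : ℕ) : (1:ℝ) ≤ 2 ^ k := one_le_pow₀ (by norm_num)

lemma T_summable {e : ℝ} (he : 0 < e) : Summable fun k : ℕ => ((2:ℝ) ^ k) ^ (-e) := by
  have : (fun k : ℕ => ((2:ℝ) ^ k) ^ (-e)) = fun k : ℕ => ((2:ℝ) ^ (-e)) ^ k := by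
    ext k
    rw [← Real.rpow_natCast, ← Real.rpow_natCast, ← Real.rpow_mul (by norm_num), ← Real.rpow_mul (by norm_num), mul_comm]
  rw [this]
  apply summable_geometric_of_lt_one (by positivity)
  exact Real.rpow_lt_one_of_one_lt_of_neg (by norm_num) (by linarith)

lemma T_tendsto : Tendsto (fun k : ℕ => (2:ℝ) ^ k) atTop atTop := tendsto_pow_atTop_atTop_of_one_lt (by norm_num)

lemma Ts_tendsto {s : ℝ} (hs : 0 < s) : Tendsto (fun k : ℕ => ((2:ℝ) ^ k) ^ s) atTop atTop :=
  (tendsto_rpow_atTop hs).comp T_tendsto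

lemma annealed_bc (hS : IsCTSRW d P S) (hz : IsScenery d α μ z) (hd : 3 ≤ d) (η K : ℝ) (hη : 0 < η) (N : ℕ)
    (f : ℕ → ℝ → ℝ) (hf : ∀ k, Measurable (f k)) (h0 : ∀ k r, 0 ≤ f k r) (h1 : ∀ k r, f k r ≤ 1)
    (hK : ∀ᶠ k : ℕ in atTop, (2:ℝ) ^ k * ∫ ζ, f k (z 0 ζ) ∂μ ≤ K) :
    ∀ᵐ ζ ∂μ, ∀ᶠ k : ℕ in atTop,
      P 0 {ω | ENNReal.ofReal (((2:ℝ) ^ k) ^ (2 * η)) ≤ ∫⁻ u in Ioc (0:ℝ) (2 ^ k), ENNReal.ofReal (f k (z (S u ω) ζ))}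
        ≤ ENNReal.ofReal (((2:ℝ) ^ k) ^ (-(N:ℝ))) := by
  have := hS.prob 0
  obtain ⟨C, hC, h⟩ := annealed hS hz hd η K hη (N+1)
  apply bc _ _ (fun k => C * ((2:ℝ) ^ k) ^ (-(1:ℝ))) _ _ _ _ _
  · intro k
    have hset : MeasurableSet {p : Ωz × Ω | ENNReal.ofReal (((2:ℝ) ^ k) ^ (2 * η)) ≤ ∫⁻ u in Ioc (0:ℝ) (2 ^ k), ENNReal.ofReal (f k (z (S u p.2) p.1))} :=
      measurableSet_le measurable_const (meas_occ hS hz (fun r => ENNReal.ofReal (f k r)) (hf k).ennreal_ofReal _)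
    exact measurable_measure_prodMk_left hset
  · intro k; positivity
  · exact (T_summable one_pos).mul_left C
  · intro k; positivity
  · filter_upwards [hK] with k hk
    refine (h _ (T_one k) (f k) (hf k) (h0 k) (h1 k) hk).trans (le_of_eq ?_)
    congr 1
    rw [mul_assoc, ← Real.rpow_add (T_pos k)]
    push_cast
    ring_nf

noncomputable def fU (M r : ℝ) : ℝ := if 0 ≤ r ∧ r ≤ M then r / M else 0
noncomputable def fL (M r : ℝ) : ℝ := if M < r then 1 else 0

lemma fL_meas (M : ℝ) : Measurable (fL M) := Measurable.ite measurableSet_Ioi measurable_const measurable_const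
lemma fL_0 (M r : ℝ) : 0 ≤ fL M r := by unfold fL; split_ifs <;> norm_num
lemma fL_1 (M r : ℝ) : fL M r ≤ 1 := by unfold fL; split_ifs <;> norm_num
lemma fU_meas (M : ℝ) : Measurable (fU M) := by
  refine Measurable.ite ?_ (by fun_prop) measurable_const
  exact measurableSet_Icc
lemma fU_0 {M : ℝ} (hM : 0 < M) (r : ℝ) : 0 ≤ fU M r := by
  unfold fU; split_ifs with h
  · exact div_nonneg h.1 hM.le
  · exact le_rfl
lemma fU_1 {M : ℝ} (hM : 0 < M) (r : ℝ) : fU M r ≤ 1 := by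
  unfold fU; split_ifs with h
  · exact (div_le_one hM).mpr h.2
  · norm_num

lemma fL_int (hz : IsScenery d α μ z) (M : ℝ) : ∫ ζ, fL M (z 0 ζ) ∂μ = (μ {ω | M < z 0 ω}).toReal := by
  have hs : MeasurableSet {ω | M < z 0 ω} := (hz.meas 0) measurableSet_Ioi
  have := integral_indicator_one (μ := μ) hs
  rw [Measure.real] at this
  rw [← this]
  congr 1

lemma seqU1 (hS : IsCTSRW d P S) (hz : IsScenery d α μ z) (hd : 3 ≤ d) (η : ℝ) (hη : 0 < η) (N : ℕ)
    {s b : ℝ} (hb0 : 0 < b) (hb1 : b ≤ 1) (hb2 : b < α) (hbs : 1 ≤ b * s) :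
    ∀ᵐ ζ ∂μ, ∀ᶠ k : ℕ in atTop,
      P 0 {ω | ENNReal.ofReal (((2:ℝ) ^ k) ^ (2 * η)) ≤ ∫⁻ u in Ioc (0:ℝ) (2 ^ k), ENNReal.ofReal (fU (((2:ℝ) ^ k) ^ s) (z (S u ω) ζ))}
        ≤ ENNReal.ofReal (((2:ℝ) ^ k) ^ (-(N:ℝ))) := by
  have hMp : ∀ k : ℕ, 0 < ((2:ℝ) ^ k) ^ s := fun k => Real.rpow_pos_of_pos (T_pos k) _
  apply annealed_bc hS hz hd η (∫ ζ, z 0 ζ ^ b ∂μ) hη N (fun k => fU (((2:ℝ) ^ k) ^ s)) (fun k => fU_meas _) (fun k => fU_0 (hMp k)) (fun k => fU_1 (hMp k))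
  refine Eventually.of_forall fun k => ?_
  set M := ((2:ℝ) ^ k) ^ s with hM
  have hM0 : 0 < M := hMp k
  have hI := moment hz hb0 hb2
  have hI0 : 0 ≤ ∫ ζ, z 0 ζ ^ b ∂μ := integral_nonneg fun ζ => Real.rpow_nonneg (hz.nonneg 0 ζ) _
  have h1 : ∫ ζ, fU M (z 0 ζ) ∂μ ≤ ∫ ζ, M ^ (-b) * z 0 ζ ^ b ∂μ := by
    apply integral_mono_of_nonneg (ae_of_all _ fun ζ => fU_0 hM0 _) (hI.const_mul _)
    refine ae_of_all _ fun ζ => ?_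
    have hz0 := hz.nonneg 0 ζ
    simp only [fU]
    split_ifs with h
    · rw [Real.rpow_neg hM0.le, mul_comm, ← div_eq_mul_inv, ← Real.div_rpow hz0 hM0.le]
      have hd0 : 0 ≤ z 0 ζ / M := by positivity
      have hd1 : z 0 ζ / M ≤ 1 := (div_le_one hM0).mpr h.2
      rcases eq_or_lt_of_le hd0 with h' | h'
      · rw [← h']; exact Real.rpow_nonneg le_rfl _
      · calc _ = (z 0 ζ / M) ^ (1:ℝ) := (Real.rpow_one _).symm
          _ ≤ _ := Real.rpow_le_rpow_of_exponent_ge h' hd1 hb1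
    · positivity
  rw [integral_const_mul] at h1
  have h2 : (2:ℝ) ^ k * M ^ (-b) ≤ 1 := by
    rw [hM, ← Real.rpow_mul (T_pos k).le]
    nth_rewrite 1 [← Real.rpow_one ((2:ℝ) ^ k)]
    rw [← Real.rpow_add (T_pos k)]
    apply Real.rpow_le_one_of_one_le_of_nonpos (T_one k)
    linarith
  calc (2:ℝ) ^ k * ∫ ζ, fU M (z 0 ζ) ∂μ ≤ (2:ℝ) ^ k * (M ^ (-b) * ∫ ζ, z 0 ζ ^ b ∂μ) := by gcongr
    _ = ((2:ℝ) ^ k * M ^ (-b)) * ∫ ζ, z 0 ζ ^ b ∂μ := by ring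
    _ ≤ 1 * _ := by gcongr
    _ = _ := one_mul _

lemma seqL1 (hS : IsCTSRW d P S) (hz : IsScenery d α μ z) (hd : 3 ≤ d) (η : ℝ) (hη : 0 < η) (N : ℕ)
    {s a : ℝ} (hs : 0 < s) (ha : a < α) (has : 1 ≤ s * a) :
    ∀ᵐ ζ ∂μ, ∀ᶠ k : ℕ in atTop,
      P 0 {ω | ENNReal.ofReal (((2:ℝ) ^ k) ^ (2 * η)) ≤ ∫⁻ u in Ioc (0:ℝ) (2 ^ k), ENNReal.ofReal (fL (((2:ℝ) ^ k) ^ s) (z (S u ω) ζ))}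
        ≤ ENNReal.ofReal (((2:ℝ) ^ k) ^ (-(N:ℝ))) := by
  apply annealed_bc hS hz hd η 1 hη N (fun k => fL (((2:ℝ) ^ k) ^ s)) (fun k => fL_meas _) (fun k => fL_0 _) (fun k => fL_1 _)
  filter_upwards [(Ts_tendsto hs).eventually (tail_up hz ha)] with k hk
  rw [fL_int hz]
  calc (2:ℝ) ^ k * (μ {ω | ((2:ℝ) ^ k) ^ s < z 0 ω}).toReal ≤ (2:ℝ) ^ k * (((2:ℝ) ^ k) ^ s) ^ (-a) := by gcongr
    _ ≤ 1 := by
      rw [← Real.rpow_mul (T_pos k).le]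
      nth_rewrite 1 [← Real.rpow_one ((2:ℝ) ^ k)]
      rw [← Real.rpow_add (T_pos k)]
      apply Real.rpow_le_one_of_one_le_of_nonpos (T_one k)
      linarith

lemma seqU2 (hS : IsCTSRW d P S) (hz : IsScenery d α μ z) {s a e : ℝ} (hs : 0 < s) (ha : a < α) (he : 0 < e) :
    ∀ᵐ ζ ∂μ, ∀ᶠ k : ℕ in atTop,
      ∑' y, {y | ((2:ℝ) ^ k) ^ s < z y ζ}.indicator (gr P S (2 * 2 ^ k) 0) y ≤ ENNReal.ofReal (((2:ℝ) ^ k) ^ (1 - s * a + e)) := by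
  have := hz.prob
  have hset : ∀ (k : ℕ) (y : Fin d → ℤ), MeasurableSet {ζ | ((2:ℝ) ^ k) ^ s < z y ζ} := fun k y => (hz.meas y) measurableSet_Ioi
  have e1 : ∀ (k : ℕ) (y : Fin d → ℤ), (fun ζ => {y | ((2:ℝ) ^ k) ^ s < z y ζ}.indicator (gr P S (2 * 2 ^ k) 0) y)
      = {ζ | ((2:ℝ) ^ k) ^ s < z y ζ}.indicator fun _ => gr P S (2 * 2 ^ k) 0 y := by
    intro k y; ext ζ; simp [indicator]
  have hm : ∀ (k : ℕ) (y : Fin d → ℤ), Measurable (fun ζ => {y | ((2:ℝ) ^ k) ^ s < z y ζ}.indicator (gr P S (2 * 2 ^ k) 0) y) := by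
    intro k y; rw [e1]; exact measurable_const.indicator (hset k y)
  apply bc _ _ (fun k => 2 * ((2:ℝ) ^ k) ^ (-e)) _ _ _ _ _
  · intro k
    exact Measurable.ennreal_tsum fun y => hm k y
  · intro k; positivity
  · exact (T_summable he).mul_left _
  · intro k; positivity
  · filter_upwards [(Ts_tendsto hs).eventually (tail_up hz ha)] with k hk
    rw [lintegral_tsum fun y => (hm k y).aemeasurable]
    have e2 : ∀ y, ∫⁻ ζ, {y | ((2:ℝ) ^ k) ^ s < z y ζ}.indicator (gr P S (2 * 2 ^ k) 0) y ∂μ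
        = gr P S (2 * 2 ^ k) 0 y * μ {ζ | ((2:ℝ) ^ k) ^ s < z 0 ζ} := by
      intro y
      rw [e1, lintegral_indicator_const (hset k y)]
      congr 1
      exact (hz.ident y).measure_mem_eq (s := Ioi (((2:ℝ) ^ k) ^ s)) measurableSet_Ioi
    simp_rw [e2]
    rw [ENNReal.tsum_mul_right, gr_sum hS]
    rw [← ENNReal.ofReal_toReal (measure_ne_top μ {ω | ((2:ℝ) ^ k) ^ s < z 0 ω}), ← ENNReal.ofReal_mul (by positivity)]
    apply ENNReal.ofReal_le_ofReal
    calc _ ≤ 2 * 2 ^ k * (((2:ℝ) ^ k) ^ s) ^ (-a) := by gcongr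
      _ = 2 * (((2:ℝ) ^ k) ^ (1:ℝ) * (((2:ℝ) ^ k) ^ s) ^ (-a)) := by rw [Real.rpow_one]; ring
      _ = 2 * (((2:ℝ) ^ k) ^ (-e) * ((2:ℝ) ^ k) ^ (1 - s * a + e)) := by
        rw [← Real.rpow_mul (T_pos k).le, ← Real.rpow_add (T_pos k), ← Real.rpow_add (T_pos k)]
        congr 2; ring
      _ = _ := by ring

noncomputable def box (d : ℕ) (c T : ℝ) : Finset (Fin d → ℤ) := Fintype.piFinset fun _ => Finset.Icc 0 ⌊c * √T⌋

lemma box_card {c T : ℝ} (hc : 0 < c) (hT : 0 < T) : c ^ d * T ^ ((d:ℝ)/2) ≤ ((box d c T).card : ℝ) := by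
  have h1 : (c * √T) ^ d = c ^ d * T ^ ((d:ℝ)/2) := by
    rw [mul_pow, Real.sqrt_eq_rpow, ← Real.rpow_natCast (T ^ (1/2:ℝ)), ← Real.rpow_mul hT.le]
    congr 2; ring
  rw [← h1, box, Fintype.card_piFinset, Finset.prod_const, Finset.card_univ, Fintype.card_fin, Int.card_Icc]
  push_cast
  have h0 : 0 ≤ c * √T := by positivity
  gcongr
  have h2 : 0 ≤ ⌊c * √T⌋ + 1 - 0 := by have := Int.floor_nonneg.mpr h0; omega
  have h3 : (((⌊c * √T⌋ + 1 - 0).toNat : ℤ) : ℝ) = ((⌊c * √T⌋ + 1 - 0 : ℤ) : ℝ) := by rw [Int.toNat_of_nonneg h2]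
  calc c * √T ≤ ⌊c * √T⌋ + 1 := (Int.lt_floor_add_one _).le
    _ = ((⌊c * √T⌋ + 1 - 0 : ℤ) : ℝ) := by push_cast; ring
    _ = _ := by rw [← h3]; norm_cast

lemma seqL2 (hz : IsScenery d α μ z) (hα : 0 < α) {s a c : ℝ} (hs : 0 < s) (hc : 0 < c) (ha : α < a) (hsa : s * a < d / 2) :
    ∀ᵐ ζ ∂μ, ∀ᶠ k : ℕ in atTop,
      c ^ d / 4 * ((2:ℝ) ^ k) ^ (d / 2 - s * a) ≤ ∑ y ∈ box d c (2 ^ k), fL (((2:ℝ) ^ k) ^ s) (z y ζ) := by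
  have := hz.prob
  set X : ℕ → Ωz → ℝ := fun k ζ => ∑ y ∈ box d c (2 ^ k), fL (((2:ℝ) ^ k) ^ s) (z y ζ) with hX
  have hXm : ∀ k, Measurable (X k) := fun k => Finset.measurable_sum _ fun y _ => (fL_meas _).comp (hz.meas y)
  set r : ℕ → ℝ := fun k => c ^ d / 4 * ((2:ℝ) ^ k) ^ (d / 2 - s * a) with hr
  have hr0 : ∀ k, 0 < r k := fun k => by positivity
  have hset : ∀ k, MeasurableSet {ζ | X k ζ < r k} := fun k => measurableSet_lt (hXm k) measurable_const
  have := bc (μ := μ) (fun k => {ζ | X k ζ < r k}.indicator 1) (fun k => measurable_one.indicator (hset k))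
    (fun k => 2 * (4 / c ^ d) * ((2:ℝ) ^ k) ^ (-(d / 2 - s * a))) (fun k => 1/2) (fun k => by positivity)
    ((T_summable (by linarith)).mul_left _) (fun k => by norm_num) ?_
  · filter_upwards [this] with ζ hζ
    filter_upwards [hζ] with k hk
    by_contra hcon
    have : ζ ∈ {ζ | X k ζ < r k} := not_le.mp hcon
    rw [indicator_of_mem this] at hk
    simp only [Pi.one_apply] at hk
    rw [← ENNReal.ofReal_one, ENNReal.ofReal_le_ofReal_iff (by norm_num)] at hk
    norm_num at hk
  · filter_upwards [(Ts_tendsto hs).eventually (tail_low hz hα ha)] with k hk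
    rw [lintegral_indicator_one (hset k)]
    have hch := chern_low hz (fL (((2:ℝ) ^ k) ^ s)) (fL_meas _) (fL_0 _) (fL_1 _) (box d c (2 ^ k))
    rw [fL_int hz] at hch
    set p := (μ {ω | ((2:ℝ) ^ k) ^ s < z 0 ω}).toReal with hp
    have hrp : r k ≤ (box d c (2 ^ k)).card * p / 4 := by
      have h1 := box_card (d := d) hc (T_pos k)
      have h2 : c ^ d * ((2:ℝ) ^ k) ^ (d / 2 - s * a) = (c ^ d * ((2:ℝ) ^ k) ^ ((d:ℝ)/2)) * (((2:ℝ) ^ k) ^ s) ^ (-a) := by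
        rw [← Real.rpow_mul (T_pos k).le, mul_assoc, ← Real.rpow_add (T_pos k)]
        congr 2; ring
      have h3 : c ^ d * ((2:ℝ) ^ k) ^ (d / 2 - s * a) ≤ (box d c (2 ^ k)).card * p := by
        rw [h2]; gcongr
      simp only [hr]; linarith
    calc μ {ζ | X k ζ < r k} ≤ μ {ζ | X k ζ ≤ (box d c (2 ^ k)).card * p / 4} := by
          apply measure_mono; intro ζ (h : X k ζ < r k); exact h.le.trans hrp
      _ = ENNReal.ofReal (μ.real {ζ | X k ζ ≤ (box d c (2 ^ k)).card * p / 4}) := by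
          rw [Measure.real, ENNReal.ofReal_toReal (measure_ne_top _ _)]
      _ ≤ _ := by
          apply ENNReal.ofReal_le_ofReal
          refine hch.trans ?_
          have h5 : Real.exp (-((box d c (2 ^ k)).card * p / 4)) ≤ Real.exp (- r k) := Real.exp_le_exp.mpr (by linarith)
          refine h5.trans ?_
          rw [Real.exp_neg]
          have h6 : r k ≤ Real.exp (r k) := by have := Real.add_one_le_exp (r k); linarith
          calc (Real.exp (r k))⁻¹ ≤ (r k)⁻¹ := inv_anti₀ (hr0 k) h6
            _ = _ := by
              simp only [hr]
              rw [Real.rpow_neg (T_pos k).le]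
              field_simp
end
end RWRS

open MeasureTheory ProbabilityTheory Filter Set
namespace RWRS
open scoped ENNReal
section
variable {d : ℕ} {Ω Ωz : Type*} [MeasurableSpace Ω] [MeasurableSpace Ωz]
    {P : (Fin d → ℤ) → Measure Ω} {S : ℝ → Ω → (Fin d → ℤ)}
    {α : ℝ} {μ : Measure Ωz} {z : (Fin d → ℤ) → Ωz → ℝ}

lemma small_lt {f g : ℝ → ℝ} (hf : Continuous f) (hg : Continuous g) (h : f 0 < g 0) :
    ∀ᶠ x in nhdsWithin (0:ℝ) (Ioi 0), f x < g x :=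
  nhdsWithin_le_nhds ((hf.tendsto 0).eventually_lt (hg.tendsto 0) h)

lemma ev_T {p : ℕ → Prop} (h : ∀ᶠ k in atTop, p k) : ∀ᶠ t : ℝ in atTop, ∃ k : ℕ, p k ∧ t ≤ 2 ^ k ∧ (2:ℝ) ^ k ≤ 2 * t := by
  obtain ⟨k0, hk0⟩ := eventually_atTop.mp h
  filter_upwards [eventually_ge_atTop ((2:ℝ) ^ k0), eventually_ge_atTop 1] with t ht h1
  obtain ⟨n, hn1, hn2⟩ := exists_nat_pow_near h1 (one_lt_two : (1:ℝ) < 2)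
  refine ⟨n + 1, hk0 _ ?_, hn2.le, ?_⟩
  · have : (2:ℝ) ^ k0 < 2 ^ (n+1) := ht.trans_lt hn2
    exact ((pow_lt_pow_iff_right₀ (one_lt_two : (1:ℝ) < 2)).mp this).le
  · rw [pow_succ]; linarith

lemma ev_rpow (C : ℝ) {x y : ℝ} (h : x < y) : ∀ᶠ t : ℝ in atTop, C * t ^ x ≤ t ^ y := by
  filter_upwards [(tendsto_rpow_atTop (sub_pos.mpr h)).eventually_ge_atTop C, eventually_gt_atTop 0] with t ht h0
  have : t ^ y = t ^ (y - x) * t ^ x := by rw [← Real.rpow_add h0]; congr 1; ring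
  rw [this]; gcongr

lemma T_up {t T : ℝ} (h0 : 0 < t) (h1 : t ≤ T) (h2 : T ≤ 2 * t) (x : ℝ) : T ^ x ≤ 2 ^ |x| * t ^ x := by
  rcases le_total 0 x with hx | hx
  · rw [abs_of_nonneg hx, ← Real.mul_rpow (by norm_num) h0.le]
    exact Real.rpow_le_rpow (by linarith) h2 hx
  · have h3 : T ^ x ≤ t ^ x := Real.rpow_le_rpow_of_nonpos h0 h1 hx
    have h4 : (1:ℝ) ≤ 2 ^ |x| := Real.one_le_rpow (by norm_num) (abs_nonneg _)
    have h5 : 0 ≤ t ^ x := by positivity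
    nlinarith

lemma T_down {t T : ℝ} (h0 : 0 < t) (h1 : t ≤ T) (h2 : T ≤ 2 * t) (x : ℝ) : 2 ^ (-|x|) * t ^ x ≤ T ^ x := by
  have hT : 0 < T := by linarith
  have h := T_up h0 h1 h2 (-x)
  rw [abs_neg, Real.rpow_neg hT.le, Real.rpow_neg h0.le] at h
  rw [Real.rpow_neg (by norm_num)]
  have h3 : 0 < T ^ x := by positivity
  have h4 : 0 < t ^ x := by positivity
  have h5 : (0:ℝ) < 2 ^ |x| := by positivity
  field_simp at h ⊢
  linarith

lemma sub_up (hz : IsScenery d α μ z) (ζ : Ωz) (ω : Ω) {t T M w r : ℝ} (htT : t ≤ T) (hM : 0 < M)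
    (hMw : M * w ≤ r) (hA : r ≤ rwrs d z S t ζ ω) (hno : ¬ ∃ u ∈ Icc 0 t, S u ω ∈ {y | M < z y ζ}) :
    ENNReal.ofReal w ≤ ∫⁻ u in Ioc (0:ℝ) T, ENNReal.ofReal (fU M (z (S u ω) ζ)) := by
  have h1 : ENNReal.ofReal (M * w) ≤ ∫⁻ u in Ioc (0:ℝ) t, ENNReal.ofReal (z (S u ω) ζ) := by
    refine (ENNReal.ofReal_le_ofReal (hMw.trans hA)).trans ?_
    unfold rwrs
    by_cases hi : Integrable (fun u => z (S u ω) ζ) (volume.restrict (Ioc (0:ℝ) t))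
    · rw [ofReal_integral_eq_lintegral_ofReal hi (ae_of_all _ fun u => hz.nonneg _ _)]
    · rw [integral_undef hi]; simp
  have h2 : ∫⁻ u in Ioc (0:ℝ) t, ENNReal.ofReal (z (S u ω) ζ) = ENNReal.ofReal M * ∫⁻ u in Ioc (0:ℝ) t, ENNReal.ofReal (fU M (z (S u ω) ζ)) := by
    rw [← lintegral_const_mul' _ _ ENNReal.ofReal_ne_top]
    refine setLIntegral_congr_fun measurableSet_Ioc fun u hu => ?_
    have h3 : z (S u ω) ζ ≤ M := by
      by_contra hc
      exact hno ⟨u, ⟨hu.1.le, hu.2⟩, not_le.mp hc⟩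
    rw [← ENNReal.ofReal_mul hM.le, fU, if_pos ⟨hz.nonneg _ _, h3⟩]
    congr 1; field_simp
  rw [h2, ENNReal.ofReal_mul hM.le] at h1
  have h4 := (ENNReal.mul_le_mul_iff_right (by simp [hM]) ENNReal.ofReal_ne_top).mp h1
  exact h4.trans (lintegral_mono_set (Ioc_subset_Ioc_right htT))

lemma upper (hd : 3 ≤ d) (hα : 0 < α) {ρ : ℝ} (hρ₁ : max (1 / α) 1 < ρ)
    (hz : IsScenery d α μ z) (hS : IsCTSRW d P S) {ε : ℝ} (hε : 0 < ε) :
    ∀ᵐ ζ ∂ μ, ∀ᶠ t : ℝ in atTop,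
      P 0 {ω | t ^ ρ ≤ rwrs d z S t ζ ω ∧ S t ω = 0} ≤ ENNReal.ofReal (t ^ (-(α * ρ) + 1 - d / 2 + ε)) := by
  have hρ1 : 1 < ρ := (le_max_right _ _).trans_lt hρ₁
  have hρα : 1 < α * ρ := by
    have := (le_max_left _ _).trans_lt hρ₁
    rw [div_lt_iff₀ hα] at this; linarith
  have hmin : 1 < min α 1 * ρ := by
    rcases min_choice α 1 with h | h <;> rw [h] <;> linarith
  have hmin0 : 0 < min α 1 := lt_min hα one_pos
  have c1 : ∀ᶠ x : ℝ in nhdsWithin (0:ℝ) (Ioi 0), 0 < min α 1 - x := small_lt (by fun_prop) (by fun_prop) (by simpa using hα)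
  have c2 : ∀ᶠ x : ℝ in nhdsWithin (0:ℝ) (Ioi 0), 1 < (min α 1 - x) * (ρ - x) := small_lt (by fun_prop) (by fun_prop) (by simpa using hmin)
  have c3 : ∀ᶠ x : ℝ in nhdsWithin (0:ℝ) (Ioi 0), α * ρ - ε / 4 < (ρ - x) * (α - x) := small_lt (by fun_prop) (by fun_prop) (by simp; nlinarith)
  have c4 : ∀ᶠ x : ℝ in nhdsWithin (0:ℝ) (Ioi 0), 0 < ρ - x := small_lt (by fun_prop) (by fun_prop) (by simp; linarith)
  obtain ⟨x, ⟨⟨⟨hx1, hx2⟩, hx3⟩, hx4⟩, hx0⟩ := (((c1.and c2).and c3).and c4 |>.and self_mem_nhdsWithin).exists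
  have hx0 : 0 < x := hx0
  set s := ρ - x with hs
  obtain ⟨N, hN⟩ := exists_nat_gt (-(-(α * ρ) + 1 - d / 2 + ε))
  have hη : 0 < x / 4 := by linarith
  have hU1 := seqU1 hS hz hd (x / 4) hη N (s := s) (b := min α 1 - x) hx1 (by have := min_le_right α 1; linarith)
    (by have := min_le_left α 1; linarith) hx2.le
  have hU2 := seqU2 hS hz (s := s) (a := α - x) (e := ε / 4) hx4 (by linarith) (by linarith)
  obtain ⟨C, hC, hpin⟩ := hit_pinned hS (by omega : 0 < d)
  filter_upwards [hU1, hU2] with ζ h1 h2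
  filter_upwards [ev_T (h1.and h2), eventually_ge_atTop 1,
    ev_rpow (2 ^ |s + 2 * (x/4)|) (show s + 2 * (x/4) < ρ by linarith),
    ev_rpow (2 * (C * 2 ^ |1 - s * (α - x) + ε/4|)) (show -(d/2:ℝ) + (1 - s * (α - x) + ε/4) < -(α * ρ) + 1 - d / 2 + ε by linarith),
    ev_rpow 2 (show (-(N:ℝ)) < -(α * ρ) + 1 - d / 2 + ε by linarith)] with t hk ht hA hB hD
  obtain ⟨k, ⟨hk1, hk2⟩, hk3, hk4⟩ := hk
  set T : ℝ := 2 ^ k with hT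
  have ht0 : 0 < t := by linarith
  have hT0 : 0 < T := T_pos k
  set M := T ^ s with hM
  have hM0 : 0 < M := by positivity
  have hMw : M * T ^ (2 * (x/4)) ≤ t ^ ρ := by
    rw [hM, ← Real.rpow_add hT0]
    exact (T_up ht0 hk3 hk4 _).trans hA
  calc _ ≤ P 0 ({ω | (∃ u ∈ Icc 0 t, S u ω ∈ {y | M < z y ζ}) ∧ S t ω = 0} ∪
        {ω | ENNReal.ofReal (T ^ (2 * (x/4))) ≤ ∫⁻ u in Ioc (0:ℝ) T, ENNReal.ofReal (fU M (z (S u ω) ζ))}) := by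
        apply measure_mono
        rintro ω ⟨hω1, hω2⟩
        by_cases hh : ∃ u ∈ Icc 0 t, S u ω ∈ {y | M < z y ζ}
        · exact Or.inl ⟨hh, hω2⟩
        · exact Or.inr (sub_up hz ζ ω hk3 hM0 hMw hω1 hh)
    _ ≤ ENNReal.ofReal (C * t^(-(d/2) : ℝ)) * ENNReal.ofReal (T ^ (1 - s * (α - x) + ε/4)) + ENNReal.ofReal (T ^ (-(N:ℝ))) := by
        refine (measure_union_le _ _).trans (add_le_add ?_ hk1)
        refine (hpin t ht _).trans ?_
        gcongr
        refine le_trans (ENNReal.tsum_le_tsum fun y => ?_) hk2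
        apply indicator_le_indicator
        exact gr_mono (by linarith) 0 y
    _ ≤ ENNReal.ofReal (t ^ (-(α * ρ) + 1 - d / 2 + ε)) := by
        rw [← ENNReal.ofReal_mul (by positivity), ← ENNReal.ofReal_add (by positivity) (by positivity)]
        apply ENNReal.ofReal_le_ofReal
        have e1 : C * t^(-(d/2) : ℝ) * T ^ (1 - s * (α - x) + ε/4) ≤ C * 2 ^ |1 - s * (α - x) + ε/4| * t ^ (-(d/2:ℝ) + (1 - s * (α - x) + ε/4)) := by
          rw [Real.rpow_add ht0]
          have := T_up ht0 hk3 hk4 (1 - s * (α - x) + ε/4)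
          calc _ ≤ C * t^(-(d/2) : ℝ) * (2 ^ |1 - s * (α - x) + ε/4| * t ^ (1 - s * (α - x) + ε/4)) := by gcongr
            _ = _ := by ring
        have e2 : T ^ (-(N:ℝ)) ≤ t ^ (-(N:ℝ)) := Real.rpow_le_rpow_of_nonpos ht0 hk3 (by simp)
        linarith

end
end RWRS

open MeasureTheory ProbabilityTheory Filter Set
namespace RWRS
open scoped ENNReal
section
variable {d : ℕ} {Ω Ωz : Type*} [MeasurableSpace Ω] [MeasurableSpace Ωz]
    {P : (Fin d → ℤ) → Measure Ω} {S : ℝ → Ω → (Fin d → ℤ)}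
    {α : ℝ} {μ : Measure Ωz} {z : (Fin d → ℤ) → Ωz → ℝ}

lemma loc_pinned (hS : IsCTSRW d P S) (t : ℝ) (y : Fin d → ℤ) :
    ∫⁻ ω in {ω | S t ω = 0}, loc S t y ω ∂(P 0) = ∫⁻ u in Ioc 0 t, P 0 {ω | S u ω = y ∧ S t ω = 0} := by
  have := hS.prob 0
  have hset : MeasurableSet {p : Ω × ℝ | S p.2 p.1 = y} := (hS.meas.comp measurable_swap) (measurableSet_singleton y)
  have h1 := Measure.prod_apply (μ := (P 0).restrict {ω | S t ω = 0}) (ν := volume.restrict (Ioc 0 t)) hset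
  have h2 := Measure.prod_apply_symm (μ := (P 0).restrict {ω | S t ω = 0}) (ν := volume.restrict (Ioc 0 t)) hset
  have h3 := h1.symm.trans h2
  refine h3.trans (lintegral_congr fun u => ?_)
  have hm : MeasurableSet ((fun x => (x, u)) ⁻¹' {p : Ω × ℝ | S p.2 p.1 = y}) := measurable_prodMk_right hset
  rw [Measure.restrict_apply hm]
  rfl

lemma loc_pinned_low (hS : IsCTSRW d P S) (hd : 0 < d) :
    ∃ c1 > (0:ℝ), ∃ c > (0:ℝ), ∀ t : ℝ, 3 ≤ t → ∀ y : Fin d → ℤ, (∀ j, |((y j : ℤ) : ℝ)| ≤ c1 * √(t/3)) →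
      ENNReal.ofReal (c * t ^ (1 - (d:ℝ))) ≤ ∫⁻ ω in {ω | S t ω = 0}, loc S t y ω ∂(P 0) := by
  obtain ⟨c1, hc1, c, hc, h⟩ := heat_lower d hd
  refine ⟨c1, hc1, c ^ 2 / 3, by positivity, ?_⟩
  intro t ht y hy
  have ht0 : 0 < t := by linarith
  rw [loc_pinned hS]
  calc ENNReal.ofReal (c^2/3 * t ^ (1 - (d:ℝ))) = ∫⁻ u in Ioc (t/3) (2*t/3), ENNReal.ofReal (c ^ 2 * t ^ (-(d:ℝ))) := by
        rw [lintegral_const, Measure.restrict_apply_univ, Real.volume_Ioc, ← ENNReal.ofReal_mul (by positivity)]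
        congr 1
        rw [sub_eq_add_neg, Real.rpow_add ht0, Real.rpow_one]; ring
    _ ≤ ∫⁻ u in Ioc (t/3) (2*t/3), P 0 {ω | S u ω = y ∧ S t ω = 0} := by
        refine setLIntegral_mono' measurableSet_Ioc fun u hu => ?_
        have hu1 : t / 3 < u := hu.1
        have hu2 : u ≤ 2 * t / 3 := hu.2
        rw [two_time hS 0 (by linarith) (by linarith), kap_eq hS (by linarith), kap_eq hS (by linarith),
          ← ENNReal.ofReal_mul (heat_nonneg d u (by linarith) _ _)]
        apply ENNReal.ofReal_le_ofReal
        have key : ∀ v : ℝ, t / 3 ≤ v → v ≤ t → ∀ a b : Fin d → ℤ, (∀ j, |((a j - b j : ℤ) : ℝ)| ≤ c1 * √(t/3)) →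
            c * t ^ (-(d/2) : ℝ) ≤ heatKernel d v a b := by
          intro v hv1 hv2 a b hab
          refine le_trans ?_ (h v (by linarith) a b fun j => (hab j).trans (by gcongr))
          refine mul_le_mul_of_nonneg_left ?_ hc.le
          exact Real.rpow_le_rpow_of_nonpos (by linarith) hv2 (by rw [neg_nonpos]; positivity)
        have k1 := key u hu1.le (by linarith) 0 y (fun j => by simpa using hy j)
        have k2 := key (t - u) (by linarith) (by linarith) y 0 (fun j => by simpa using hy j)
        calc c ^ 2 * t ^ (-(d:ℝ)) = (c * t ^ (-(d/2) : ℝ)) * (c * t ^ (-(d/2) : ℝ)) := by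
              have : t ^ (-(d:ℝ)) = t ^ (-(d/2) : ℝ) * t ^ (-(d/2) : ℝ) := by rw [← Real.rpow_add ht0]; congr 1; ring
              rw [this]; ring
          _ ≤ _ := mul_le_mul k1 k2 (by positivity) (heat_nonneg d u (by linarith) _ _)
    _ ≤ _ := lintegral_mono_set (Ioc_subset_Ioc (by linarith) (by linarith))

lemma box_small {c1 t T : ℝ} (hc1 : 0 < c1) (ht : 0 < t) (hT : T ≤ 2 * t) (hT0 : 0 ≤ T) {y : Fin d → ℤ} (hy : y ∈ box d (c1/3) T) (j : Fin d) :
    |((y j : ℤ) : ℝ)| ≤ c1 * √(t/3) := by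
  have h := Fintype.mem_piFinset.mp hy j
  rw [Finset.mem_Icc] at h
  have h0 : (0:ℝ) ≤ (y j : ℝ) := by exact_mod_cast h.1
  rw [abs_of_nonneg h0]
  have h1 : ((y j : ℤ) : ℝ) ≤ c1/3 * √T := Int.le_floor.mp h.2
  refine h1.trans ?_
  have h2 : √T ≤ 3 * √(t/3) := by
    rw [Real.sqrt_le_left (by positivity), mul_pow, Real.sq_sqrt (by positivity)]
    linarith
  calc c1/3 * √T ≤ c1 / 3 * (3 * √(t/3)) := by gcongr
    _ = _ := by ring

lemma sub_low (hS : IsCTSRW d P S) (hz : IsScenery d α μ z) (ζ : Ωz) (ω : Ω) {t M w r : ℝ} (hM : 0 < M)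
    (hMw : r ≤ M * w) (hω : {y | ∃ u ∈ Icc 0 t, S u ω = y}.Finite)
    (hw : ENNReal.ofReal w < ∫⁻ u in Ioc (0:ℝ) t, ENNReal.ofReal (fL M (z (S u ω) ζ))) :
    r ≤ rwrs d z S t ζ ω := by
  have hm : Measurable fun u => z (S u ω) ζ := (measurable_of_countable fun y => z y ζ).comp (measP hS ω)
  have hi : Integrable (fun u => z (S u ω) ζ) (volume.restrict (Ioc (0:ℝ) t)) := by
    obtain ⟨B, hB⟩ := (hω.image fun y => z y ζ).bddAbove
    refine Integrable.of_bound hm.aestronglyMeasurable B ?_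
    filter_upwards [ae_restrict_mem measurableSet_Ioc] with u hu
    rw [Real.norm_eq_abs, abs_of_nonneg (hz.nonneg _ _)]
    exact hB ⟨_, ⟨u, ⟨hu.1.le, hu.2⟩, rfl⟩, rfl⟩
  have h0 : 0 ≤ rwrs d z S t ζ ω := integral_nonneg fun u => hz.nonneg _ _
  refine hMw.trans ((ENNReal.ofReal_le_ofReal_iff h0).mp ?_)
  rw [rwrs, ofReal_integral_eq_lintegral_ofReal hi (ae_of_all _ fun u => hz.nonneg _ _), ENNReal.ofReal_mul hM.le]
  calc ENNReal.ofReal M * ENNReal.ofReal w ≤ ENNReal.ofReal M * ∫⁻ u in Ioc (0:ℝ) t, ENNReal.ofReal (fL M (z (S u ω) ζ)) := by gcongr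
    _ = ∫⁻ u in Ioc (0:ℝ) t, ENNReal.ofReal M * ENNReal.ofReal (fL M (z (S u ω) ζ)) := by
        rw [lintegral_const_mul' _ _ ENNReal.ofReal_ne_top]
    _ ≤ _ := by
        refine lintegral_mono fun u => ?_
        simp only
        rw [← ENNReal.ofReal_mul hM.le]
        apply ENNReal.ofReal_le_ofReal
        unfold fL
        split_ifs with h
        · linarith
        · simpa using hz.nonneg _ _

lemma lower_det (hS : IsCTSRW d P S) (hz : IsScenery d α μ z) (ζ : Ωz) {t T M w r W : ℝ} (hM : 0 < M)
    (ht : 0 < t) (htT : t ≤ T) (hMw : r ≤ M * w) (F : Finset (Fin d → ℤ)) {q : ℝ} (hq : 0 ≤ q)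
    (hF : ∀ y ∈ F, ENNReal.ofReal q ≤ ∫⁻ ω in {ω | S t ω = 0}, loc S t y ω ∂(P 0)) :
    ENNReal.ofReal (q * ∑ y ∈ F, fL M (z y ζ)) ≤
      ENNReal.ofReal w * P 0 {ω | (∃ u ∈ Icc 0 t, S u ω ∈ {y | M < z y ζ}) ∧ S t ω = 0}
      + ENNReal.ofReal t * P 0 {ω | ENNReal.ofReal W ≤ ∫⁻ u in Ioc (0:ℝ) T, ENNReal.ofReal (fL M (z (S u ω) ζ))}
      + ENNReal.ofReal W * P 0 {ω | r ≤ rwrs d z S t ζ ω ∧ S t ω = 0} := by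
  have := hS.prob 0
  let g : (Fin d → ℤ) → ℝ≥0∞ := fun y => ENNReal.ofReal (fL M (z y ζ))
  let X : ℝ → Ω → ℝ≥0∞ := fun v ω => ∫⁻ u in Ioc (0:ℝ) v, g (S u ω)
  have hXm : ∀ v, Measurable (X v) := by
    intro v
    have : Measurable fun p : Ω × ℝ => g (S p.2 p.1) := (measurable_of_countable g).comp (hS.meas.comp measurable_swap)
    exact this.lintegral_prod_right'
  let E : Set Ω := {ω | S t ω = 0}
  have hE : MeasurableSet E := measS hS t (measurableSet_singleton 0)
  have hX_t : ∀ ω, X t ω ≤ ENNReal.ofReal t := by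
    intro ω
    calc X t ω ≤ ∫⁻ u in Ioc (0:ℝ) t, 1 := by
          refine lintegral_mono fun u => ?_
          simpa [g] using fL_1 M (z (S u ω) ζ)
      _ = _ := by simp
  have hX_T : ∀ ω, X t ω ≤ X T ω := fun ω => lintegral_mono_set (Ioc_subset_Ioc_right htT)
  have low : ENNReal.ofReal (q * ∑ y ∈ F, fL M (z y ζ)) ≤ ∫⁻ ω in E, X t ω ∂(P 0) := by
    calc ENNReal.ofReal (q * ∑ y ∈ F, fL M (z y ζ)) = ∑ y ∈ F, g y * ENNReal.ofReal q := by
          rw [mul_comm, ENNReal.ofReal_mul (Finset.sum_nonneg fun y _ => fL_0 _ _), ENNReal.ofReal_sum_of_nonneg (fun y _ => fL_0 _ _), Finset.sum_mul]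
      _ ≤ ∑ y ∈ F, g y * ∫⁻ ω in E, loc S t y ω ∂(P 0) := Finset.sum_le_sum fun y hy => by gcongr; exact hF y hy
      _ = ∫⁻ ω in E, ∑ y ∈ F, g y * loc S t y ω ∂(P 0) := by
          rw [lintegral_finsetSum _ fun y _ => (loc_meas hS t y).const_mul _]
          refine Finset.sum_congr rfl fun y _ => ?_
          rw [lintegral_const_mul _ (loc_meas hS t y)]
      _ ≤ _ := by
          refine lintegral_mono fun ω => ?_
          simp only [X]
          rw [occ_formula hS t ω g]
          exact ENNReal.sum_le_tsum F
  refine low.trans ?_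
  let A1 : Set Ω := {ω | X t ω ≠ 0}
  let A2 : Set Ω := {ω | ENNReal.ofReal W ≤ X T ω}
  let A3 : Set Ω := {ω | ENNReal.ofReal w < X t ω}
  have hA1 : MeasurableSet A1 := (hXm t) (measurableSet_singleton 0).compl
  have hA2 : MeasurableSet A2 := measurableSet_le measurable_const (hXm T)
  have hA3 : MeasurableSet A3 := measurableSet_lt measurable_const (hXm t)
  have pt : ∀ ω, X t ω ≤ A1.indicator (fun _ => ENNReal.ofReal w) ω + A2.indicator (fun _ => ENNReal.ofReal t) ω + A3.indicator (fun _ => ENNReal.ofReal W) ω := by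
    intro ω
    by_cases h2 : ω ∈ A2
    · rw [indicator_of_mem h2]
      exact (hX_t ω).trans (le_add_right (le_add_left le_rfl))
    by_cases h3 : ω ∈ A3
    · rw [indicator_of_mem h3]
      exact ((hX_T ω).trans (not_le.mp h2).le).trans (le_add_left le_rfl)
    by_cases h1 : ω ∈ A1
    · rw [indicator_of_mem h1]
      exact (not_lt.mp h3).trans (le_add_right (le_add_right le_rfl))
    · have : X t ω = 0 := not_not.mp h1
      rw [this]; exact zero_le
  calc ∫⁻ ω in E, X t ω ∂(P 0) ≤ ∫⁻ ω in E, (A1.indicator (fun _ => ENNReal.ofReal w) ω + A2.indicator (fun _ => ENNReal.ofReal t) ω + A3.indicator (fun _ => ENNReal.ofReal W) ω) ∂(P 0) := lintegral_mono pt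
    _ = ENNReal.ofReal w * P 0 (A1 ∩ E) + ENNReal.ofReal t * P 0 (A2 ∩ E) + ENNReal.ofReal W * P 0 (A3 ∩ E) := by
        rw [lintegral_add_right _ (measurable_const.indicator hA3), lintegral_add_right _ (measurable_const.indicator hA2),
          lintegral_indicator_const hA1, lintegral_indicator_const hA2, lintegral_indicator_const hA3,
          Measure.restrict_apply hA1, Measure.restrict_apply hA2, Measure.restrict_apply hA3]
    _ ≤ _ := by
        have i1 : P 0 (A1 ∩ E) ≤ P 0 {ω | (∃ u ∈ Icc 0 t, S u ω ∈ {y | M < z y ζ}) ∧ S t ω = 0} := by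
          apply measure_mono
          rintro ω ⟨h1, h2⟩
          refine ⟨?_, h2⟩
          by_contra hc
          apply h1
          show ∫⁻ u in Ioc (0:ℝ) t, g (S u ω) = 0
          rw [setLIntegral_congr_fun (g := fun _ => 0) measurableSet_Ioc]
          · simp
          · intro u hu
            have : ¬ M < z (S u ω) ζ := fun h => hc ⟨u, ⟨hu.1.le, hu.2⟩, h⟩
            simp [g, fL, this]
        have i2 : P 0 (A2 ∩ E) ≤ P 0 {ω | ENNReal.ofReal W ≤ ∫⁻ u in Ioc (0:ℝ) T, ENNReal.ofReal (fL M (z (S u ω) ζ))} :=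
          measure_mono inter_subset_left
        have i3 : P 0 (A3 ∩ E) ≤ P 0 {ω | r ≤ rwrs d z S t ζ ω ∧ S t ω = 0} := by
          apply measure_mono_ae
          filter_upwards [finite_range hS 0] with ω hω
          rintro ⟨h1, h2⟩
          exact ⟨sub_low hS hz ζ ω hM hMw (hω t) h1, h2⟩
        gcongr

lemma lower (hd : 3 ≤ d) (hα : 0 < α) {ρ : ℝ} (hρ₁ : max (1 / α) 1 < ρ) (hρ₂ : ρ < d / (2 * α))
    (hz : IsScenery d α μ z) (hS : IsCTSRW d P S) {ε : ℝ} (hε : 0 < ε) :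
    ∀ᵐ ζ ∂ μ, ∀ᶠ t : ℝ in atTop,
      ENNReal.ofReal (t ^ (-(α * ρ) + 1 - d / 2 - ε)) ≤ P 0 {ω | t ^ ρ ≤ rwrs d z S t ζ ω ∧ S t ω = 0} := by
  have hρ1 : 1 < ρ := (le_max_right _ _).trans_lt hρ₁
  have hρα : 1 < α * ρ := by
    have := (le_max_left _ _).trans_lt hρ₁
    rw [div_lt_iff₀ hα] at this; linarith
  have hρd : ρ * α < d / 2 := by
    rw [lt_div_iff₀ (by positivity)] at hρ₂; linarith
  let K := 2 * ρ + 4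
  have hK : 0 < K := by simp only [K]; linarith
  have c1 : ∀ᶠ x : ℝ in nhdsWithin (0:ℝ) (Ioi 0), 2 * K * x < 3 := small_lt (by fun_prop) (by fun_prop) (by simp)
  have c2 : ∀ᶠ x : ℝ in nhdsWithin (0:ℝ) (Ioi 0), (ρ + K * x) * (α + x) < d / 2 := small_lt (by fun_prop) (by fun_prop) (by simpa using hρd)
  have c3 : ∀ᶠ x : ℝ in nhdsWithin (0:ℝ) (Ioi 0), (ρ + K * x) * (α + x) + 2 * x < α * ρ + ε := small_lt (by fun_prop) (by fun_prop) (by simp; nlinarith)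
  have c4 : ∀ᶠ x : ℝ in nhdsWithin (0:ℝ) (Ioi 0), 1 < (ρ + K * x) * (α - x) := small_lt (by fun_prop) (by fun_prop) (by simp; nlinarith)
  obtain ⟨x, ⟨⟨⟨hx1, hx2⟩, hx3⟩, hx4⟩, hx0⟩ := (((c1.and c2).and c3).and c4 |>.and self_mem_nhdsWithin).exists
  have hx0 : 0 < x := hx0
  set s := ρ + K * x with hs
  have hs0 : 0 < s := by have := mul_pos hK hx0; linarith
  set γ := d / 2 - s * (α + x) with hγ
  obtain ⟨C, hC, hpin⟩ := hit_pinned hS (by omega : 0 < d)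
  obtain ⟨c1, hc1, c, hc, hlow⟩ := loc_pinned_low hS (by omega : 0 < d)
  have hL1 := seqL1 hS hz hd x hx0 d (s := s) (a := α - x) hs0 (by linarith) hx4.le
  have hU2 := seqU2 hS hz (s := s) (a := α - x) (e := x) hs0 (by linarith) hx0
  have hL2 := seqL2 hz hα (s := s) (a := α + x) (c := c1 / 3) hs0 (by positivity) (by linarith) hx2
  set c2 : ℝ := c * ((c1/3) ^ d / 4 * 2 ^ (-|γ|)) with hc2
  have hc20 : 0 < c2 := by positivity
  set D1 : ℝ := C * 2 ^ |1 - s * (α - x) + x| with hD1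
  set D2 : ℝ := 2 ^ |2 * x| with hD2
  have hD20 : 0 < D2 := by positivity
  have ex1 : - (K * x) + (-(d/2:ℝ) + (1 - s * (α - x) + x)) < 1 - d + γ := by
    have : s * (2 * x) + x < K * x := by
      have h1 : 2 * K * x * x < 3 * x := mul_lt_mul_of_pos_right hx1 hx0
      simp only [hs, K] at h1 ⊢
      nlinarith
    simp only [hγ]; nlinarith
  have ex2 : 1 + (-(d:ℝ)) < 1 - d + γ := by simp only [hγ]; linarith
  have ex3 : -(α * ρ) + 1 - d / 2 - ε < 1 - d + γ - 2 * x := by simp only [hγ]; linarith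
  filter_upwards [hL1, hU2, hL2] with ζ h1 h2 h3
  filter_upwards [ev_T ((h1.and h2).and h3), eventually_ge_atTop 3, ev_rpow (4 / c2 * D1) ex1, ev_rpow (4 / c2) ex2,
    ev_rpow (2 / c2 * D2) ex3] with t hk ht hA hB hD
  obtain ⟨k, ⟨⟨hk1, hk2⟩, hk3⟩, hk4, hk5⟩ := hk
  set T : ℝ := 2 ^ k with hT
  have ht0 : 0 < t := by linarith
  have hT0 : 0 < T := T_pos k
  set M := T ^ s with hM
  have hM0 : 0 < M := by positivity
  have hMw : t ^ ρ ≤ M * t ^ (-(K * x)) := by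
    calc t ^ ρ = t ^ s * t ^ (-(K * x)) := by rw [← Real.rpow_add ht0]; congr 1; simp only [hs]; ring
      _ ≤ _ := by
        have hts : t ^ s ≤ M := Real.rpow_le_rpow ht0.le hk4 hs0.le
        gcongr
  have main := lower_det hS hz ζ (W := T ^ (2 * x)) hM0 ht0 hk4 hMw (box d (c1/3) T) (q := c * t ^ (1 - (d:ℝ))) (by positivity)
    (fun y hy => hlow t ht y (fun j => box_small hc1 ht0 hk5 hT0.le hy j))
  set p := P 0 {ω | t ^ ρ ≤ rwrs d z S t ζ ω ∧ S t ω = 0} with hp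
  have hpfin : p ≠ ∞ := by have := hS.prob 0; exact measure_ne_top _ _
  have hhit : P 0 {ω | (∃ u ∈ Icc 0 t, S u ω ∈ {y | M < z y ζ}) ∧ S t ω = 0} ≤ ENNReal.ofReal (D1 * t ^ (-(d/2:ℝ) + (1 - s * (α - x) + x))) := by
    refine (hpin t (by linarith) _).trans ?_
    calc _ ≤ ENNReal.ofReal (C * t^(-(d/2) : ℝ)) * ENNReal.ofReal (T ^ (1 - s * (α - x) + x)) := by
          gcongr
          refine le_trans (ENNReal.tsum_le_tsum fun y => ?_) hk2
          apply indicator_le_indicator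
          exact gr_mono (by linarith) 0 y
      _ ≤ _ := by
          rw [← ENNReal.ofReal_mul (by positivity)]
          apply ENNReal.ofReal_le_ofReal
          rw [Real.rpow_add ht0]
          have := T_up ht0 hk4 hk5 (1 - s * (α - x) + x)
          calc _ ≤ C * t^(-(d/2) : ℝ) * (2 ^ |1 - s * (α - x) + x| * t ^ (1 - s * (α - x) + x)) := by gcongr
            _ = _ := by simp only [hD1]; ring
  have hlhs : c2 * t ^ (1 - d + γ) ≤ c * t ^ (1 - (d:ℝ)) * ∑ y ∈ box d (c1/3) T, fL M (z y ζ) := by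
    have := T_down ht0 hk4 hk5 γ
    calc c2 * t ^ (1 - d + γ) = c * t ^ (1 - (d:ℝ)) * ((c1/3) ^ d / 4 * (2 ^ (-|γ|) * t ^ γ)) := by
          rw [Real.rpow_add ht0]; simp only [hc2]; ring
      _ ≤ c * t ^ (1 - (d:ℝ)) * ((c1/3) ^ d / 4 * T ^ γ) := by gcongr
      _ ≤ _ := mul_le_mul_of_nonneg_left hk3 (by positivity)
  have key : ENNReal.ofReal (c2 * t ^ (1 - d + γ)) ≤
      ENNReal.ofReal (t ^ (-(K * x)) * (D1 * t ^ (-(d/2:ℝ) + (1 - s * (α - x) + x))) + t * t ^ (-(d:ℝ)) + D2 * t ^ (2 * x) * p.toReal) := by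
    rw [ENNReal.ofReal_add (by positivity) (by positivity), ENNReal.ofReal_add (by positivity) (by positivity),
      ENNReal.ofReal_mul (by positivity : 0 ≤ t ^ (-(K * x))), ENNReal.ofReal_mul ht0.le, ENNReal.ofReal_mul (by positivity : 0 ≤ D2 * t ^ (2*x)),
      ENNReal.ofReal_toReal hpfin]
    refine (ENNReal.ofReal_le_ofReal hlhs).trans (main.trans ?_)
    have e2 : T ^ (-(d:ℝ)) ≤ t ^ (-(d:ℝ)) := Real.rpow_le_rpow_of_nonpos ht0 hk4 (by simp)
    have e3 : T ^ (2 * x) ≤ D2 * t ^ (2 * x) := T_up ht0 hk4 hk5 _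
    have e4 := hk1.trans (ENNReal.ofReal_le_ofReal e2)
    have e5 := ENNReal.ofReal_le_ofReal e3
    exact add_le_add (add_le_add (mul_le_mul_right hhit _) (mul_le_mul_right e4 _)) (mul_le_mul_left e5 _)
  rw [ENNReal.ofReal_le_ofReal_iff (by positivity)] at key
  have f1 : t ^ (-(K * x)) * (D1 * t ^ (-(d/2:ℝ) + (1 - s * (α - x) + x))) ≤ c2 / 4 * t ^ (1 - d + γ) := by
    rw [Real.rpow_add ht0 (-(K*x))] at hA
    calc _ = c2 / 4 * (4 / c2 * D1 * (t ^ (-(K * x)) * t ^ (-(d/2:ℝ) + (1 - s * (α - x) + x)))) := by field_simp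
      _ ≤ _ := by gcongr
  have f2 : t * t ^ (-(d:ℝ)) ≤ c2 / 4 * t ^ (1 - d + γ) := by
    rw [Real.rpow_add ht0 1, Real.rpow_one] at hB
    calc _ = c2 / 4 * (4 / c2 * (t * t ^ (-(d:ℝ)))) := by field_simp
      _ ≤ _ := by gcongr
  have f3 : c2 / 2 * t ^ (1 - d + γ) ≤ D2 * t ^ (2 * x) * p.toReal := by linarith
  rw [← ENNReal.ofReal_toReal hpfin]
  apply ENNReal.ofReal_le_ofReal
  have f4 : t ^ (1 - d + γ) = t ^ (1 - d + γ - 2 * x) * t ^ (2 * x) := by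
    rw [← Real.rpow_add ht0]; congr 1; ring
  rw [f4] at f3
  have htx : 0 < t ^ (2 * x) := by positivity
  have f5 : c2 / 2 * t ^ (1 - d + γ - 2 * x) ≤ D2 * p.toReal := by
    refine le_of_mul_le_mul_right ?_ htx
    linarith
  have f6 : c2 / 2 * (2 / c2 * D2 * t ^ (-(α * ρ) + 1 - d / 2 - ε)) ≤ D2 * p.toReal := le_trans (by gcongr) f5
  have f7 : D2 * t ^ (-(α * ρ) + 1 - d / 2 - ε) ≤ D2 * p.toReal := by
    refine le_trans (le_of_eq ?_) f6
    field_simp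
  exact le_of_mul_le_mul_left f7 hD20

end
end RWRS


/-- Theorem (upper deviation, power-law regime, pinned):
for `d ≥ 3`, `0 < α < d/2` and `max(1/α,1) < ρ < d/(2α)`, ℙ-a.s.
`P₀(A(t) ≥ t^ρ, S_t = 0) = t^{-αρ+1-d/2+o(1)}` as `t → ∞`. -/
theorem stmt1 (d : ℕ) (hd : 3 ≤ d) (α ρ : ℝ) (hα : 0 < α) (hαd : α < d / 2)
    (hρ₁ : max (1 / α) 1 < ρ) (hρ₂ : ρ < d / (2 * α))
    {Ωz Ωw : Type*} [MeasurableSpace Ωz] [MeasurableSpace Ωw]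
    (μ : Measure Ωz) (z : (Fin d → ℤ) → Ωz → ℝ) (hz : IsScenery d α μ z)
    (P : (Fin d → ℤ) → Measure Ωw) (S : ℝ → Ωw → (Fin d → ℤ)) (hS : IsCTSRW d P S) :
    ∀ᵐ ζ ∂ μ, Tendsto
      (fun t : ℝ => Real.log
          ((P 0) {ω | t ^ ρ ≤ rwrs d z S t ζ ω ∧ S t ω = 0}).toReal / Real.log t)
      atTop (nhds (-(α * ρ) + 1 - d / 2)) := by
  have hu : ∀ᵐ ζ ∂ μ, ∀ n : ℕ, ∀ᶠ t : ℝ in atTop,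
      P 0 {ω | t ^ ρ ≤ rwrs d z S t ζ ω ∧ S t ω = 0} ≤ ENNReal.ofReal (t ^ (-(α * ρ) + 1 - d / 2 + 1 / ((n:ℝ) + 1))) :=
    ae_all_iff.mpr fun n => RWRS.upper hd hα hρ₁ hz hS Nat.one_div_pos_of_nat
  have hl : ∀ᵐ ζ ∂ μ, ∀ n : ℕ, ∀ᶠ t : ℝ in atTop,
      ENNReal.ofReal (t ^ (-(α * ρ) + 1 - d / 2 - 1 / ((n:ℝ) + 1))) ≤ P 0 {ω | t ^ ρ ≤ rwrs d z S t ζ ω ∧ S t ω = 0} :=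
    ae_all_iff.mpr fun n => RWRS.lower hd hα hρ₁ hρ₂ hz hS Nat.one_div_pos_of_nat
  filter_upwards [hu, hl] with ζ h1 h2
  rw [Metric.tendsto_nhds]
  intro ε hε
  obtain ⟨n, hn⟩ := exists_nat_one_div_lt hε
  filter_upwards [h1 n, h2 n, eventually_gt_atTop 1] with t hu hl ht
  have ht0 : 0 < t := by linarith
  have hlog : 0 < Real.log t := Real.log_pos ht
  have hfin : P 0 {ω | t ^ ρ ≤ rwrs d z S t ζ ω ∧ S t ω = 0} ≠ ⊤ := ne_top_of_le_ne_top ENNReal.ofReal_ne_top hu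
  have hl' := (ENNReal.ofReal_le_iff_le_toReal hfin).mp hl
  have hu' := ENNReal.toReal_le_of_le_ofReal (by positivity) hu
  set p := (P 0 {ω | t ^ ρ ≤ rwrs d z S t ζ ω ∧ S t ω = 0}).toReal with hp
  have hp0 : 0 < p := lt_of_lt_of_le (by positivity) hl'
  have g1 := Real.log_le_log (by positivity) hl'
  have g2 := Real.log_le_log hp0 hu'
  rw [Real.log_rpow ht0] at g1 g2
  rw [Real.dist_eq, abs_lt]
  constructor
  · have := (le_div_iff₀ hlog).mpr g1
    linarith
  · have := (div_le_iff₀ hlog).mpr g2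
    linarith
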